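/- Fix a vector v ∈ ℝ^N and for i ∈ [N] let y_iᵀ = (v_i, b_iᵀ) where b_1,…,b_N are i.i.d. N(0, (1/N) I_{n−1}) Gaussian vectors. Define the n×n matrix M := Σ_{i=1}^N (‖y_i‖² − (n−1)/N) y_i y_iᵀ − (3/N) I_n. There exists a universal constant C > 0 such that for every δ ∈ (0,1), defining η := C( (‖v‖+1)·n√(log(N/δ))/N^{3/2} + ‖v‖₄²·√(n·log(N/δ))/N + ‖v‖₆³·(√n+√(log(N/δ)))/√N + ‖v‖_∞²·(n·log(N/δ)+log²(N/δ))/N + (n·log(N/δ))^{3/2}/N² + |‖v‖²−1|/N ), if N ≥ log⁷(N/δ) then with probability at least 1−δ, ‖M − (‖v‖₄⁴ − 3/N) e₁e₁ᵀ‖ ≤ η, where e₁ is the first standard basis vector of ℝ^n and ‖·‖ on matrices denotes the spectral norm. -/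

import Mathlib

open MeasureTheory ProbabilityTheory Matrix

/-- Euclidean norm of a vector in `ℝ^k`. -/
noncomputable def eucNorm {k : ℕ} (v : Fin k → ℝ) : ℝ := Real.sqrt (∑ i, (v i) ^ 2)

/-- ℓ_p norm of a vector in `ℝ^k`. -/
noncomputable def lpNorm {k : ℕ} (p : ℝ) (v : Fin k → ℝ) : ℝ := (∑ i, |v i| ^ p) ^ (1 / p)

/-- Supremum (ℓ_∞) norm of a vector in `ℝ^k`. -/
noncomputable def supNorm {k : ℕ} (v : Fin k → ℝ) : ℝ := ⨆ i, |v i|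

/-- Spectral (ℓ₂ operator) norm of a real matrix. -/
noncomputable def specNorm {m k : ℕ} (M : Matrix (Fin m) (Fin k) ℝ) : ℝ :=
  ‖LinearMap.toContinuousLinearMap (Matrix.toEuclideanLin M)‖

/-- The Gaussian measure `N(0, σ2 · I_k)` on `ℝ^k`. -/
noncomputable def gaussVec (k : ℕ) (σ2 : NNReal) : Measure (Fin k → ℝ) :=
  Measure.pi fun _ => gaussianReal 0 σ2

instance (k : ℕ) (σ2 : NNReal) : IsProbabilityMeasure (gaussVec k σ2) := by
  unfold gaussVec; infer_instance

/-- The law of `N` i.i.d. samples from `N(0, σ2 · I_k)`. -/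
noncomputable def iidGaussVec (N k : ℕ) (σ2 : NNReal) : Measure (Fin N → Fin k → ℝ) :=
  Measure.pi fun _ => gaussVec k σ2

/-- Concatenation `(a, bᵀ)ᵀ ∈ ℝ^n` of a scalar `a` with a vector `b ∈ ℝ^{n-1}`. -/
noncomputable def rowCat {n : ℕ} (a : ℝ) (b : Fin (n - 1) → ℝ) : Fin n → ℝ :=
  fun j => if h : (j : ℕ) = 0 then a else b ⟨(j : ℕ) - 1, by have := j.isLt; omega⟩

/-- The `N × n` matrix whose rows are `y_iᵀ = (v_i, b_iᵀ)`, i.e. whose first column is `v`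
and whose remaining `n - 1` columns are given by `B`. -/
noncomputable def gaussBasis {N n : ℕ} (v : Fin N → ℝ) (B : Fin N → Fin (n - 1) → ℝ) :
    Matrix (Fin N) (Fin n) ℝ :=
  Matrix.of fun i => rowCat (v i) (B i)

/-- The matrix `M(Y) = ∑_i (‖y_i‖² - (n-1)/N) y_i y_iᵀ - (3/N) I_n` built from the rows
`y_iᵀ` of `Y`. -/
noncomputable def specMat {N n : ℕ} (Y : Matrix (Fin N) (Fin n) ℝ) :
    Matrix (Fin n) (Fin n) ℝ :=
  (∑ i, ((∑ j, (Y i j) ^ 2) - ((n : ℝ) - 1) / N) • Matrix.vecMulVec (Y i) (Y i))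
    - ((3 : ℝ) / N) • (1 : Matrix (Fin n) (Fin n) ℝ)

/-- First standard basis vector of `ℝ^n`. -/
noncomputable def e1vec (n : ℕ) : Fin n → ℝ := fun j => if (j : ℕ) = 0 then 1 else 0

/-- The quantity `η = η(N, n, v, δ)` with universal constant `C`. -/
noncomputable def etaBound (C : ℝ) (N n : ℕ) (v : Fin N → ℝ) (δ : ℝ) : ℝ :=
  C * ((eucNorm v + 1) * n * Real.sqrt (Real.log (N / δ)) / (N : ℝ) ^ ((3 : ℝ) / 2)
    + lpNorm 4 v ^ 2 * Real.sqrt (n * Real.log (N / δ)) / N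
    + lpNorm 6 v ^ 3 * (Real.sqrt n + Real.sqrt (Real.log (N / δ))) / Real.sqrt N
    + supNorm v ^ 2 * (n * Real.log (N / δ) + (Real.log (N / δ)) ^ 2) / N
    + (n * Real.log (N / δ)) ^ ((3 : ℝ) / 2) / (N : ℝ) ^ 2
    + |eucNorm v ^ 2 - 1| / N)

/-!
Splitting `ℝⁿ = ℝ e₁ ⊕ ℝᵈ`, the quadratic form of `M - (‖v‖₄⁴ - 3/N) e₁e₁ᵀ` at `(s, x)` expands
into five centred statistics of i.i.d. standard Gaussian rows `gᵢ`, with `ξᵢ = ‖gᵢ‖² - d`: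
`∑ vᵢ² ξᵢ`, `∑ vᵢ³ gᵢ`, `∑ vᵢ ξᵢ gᵢ`, `∑ vᵢ² (gᵢgᵢᵀ - 1)` and `∑ ξᵢ gᵢgᵢᵀ - 2N`, plus the
deterministic term `(‖v‖² - 1) / N`. The norm of each vector or matrix statistic is reduced to
scalars by coordinates or a net of the sphere, and each scalar is a weighted sum of independent
copies of a variable with exponential tails, to which Bernstein's inequality applies. The last
factors `ξᵢ gᵢ` and `ξᵢ gᵢgᵢᵀ` become sub-exponential after truncating `ξᵢ` at
`8 (√(d L) + L)`, and this costs only a bias of order `√d exp (-L)`. A union bound with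
`L = log (N / δ)` then gives `η`.
-/

/-- `X` has a sub-exponential moment generating function with respect to `μ`, with centre `m`,
bias `e`, variance proxy `V` and scale `R`. The measure `μ` need not be a probability measure: for
a restricted measure `μ.restrict G` this is sub-exponentiality on the event `G`, and the bias `e`
accounts for the mean that is lost outside `G`. -/
structure HasSubexponentialMGF {Ω : Type*} [MeasurableSpace Ω] (X : Ω → ℝ) (m e V R : ℝ)
    (μ : Measure Ω) : Prop where
  integrable_exp_mul : ∀ s : ℝ, |s| * R ≤ 1 → Integrable (fun ω => Real.exp (s * X ω)) μ
  mgf_le : ∀ s : ℝ, |s| * R ≤ 1 → mgf X μ s ≤ Real.exp (s * m + |s| * e + s ^ 2 * V)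

lemma exists_chernoff_parameter {K V R : ℝ} (hK : 0 < K) (hV : 0 ≤ V) (hR : 0 < R) :
    ∃ l : ℝ, 0 < l ∧ l * R ≤ 1 ∧ l * V + K / l ≤ 2 * √(K * V) + K * R := by
  have hKpos := Real.sqrt_pos.2 hK
  have hVnonneg := Real.sqrt_nonneg V
  have hden : 0 < √V + √K * R := by positivity
  refine ⟨√K / (√V + √K * R), by positivity, ?_, ?_⟩
  · rw [div_mul_eq_mul_div, div_le_one hden]
    linarith
  · have hfirst : √K / (√V + √K * R) * V ≤ √K * √V := by
      rw [div_mul_eq_mul_div, div_le_iff₀ hden]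
      nlinarith [Real.mul_self_sqrt hV, show 0 ≤ √K * √V * (√K * R) by positivity]
    have hsecond : K / (√K / (√V + √K * R)) = √K * √V + K * R := by
      rw [div_div_eq_mul_div, div_eq_iff hKpos.ne']
      nlinarith [Real.mul_self_sqrt hK.le]
    rw [hsecond, Real.sqrt_mul hK.le]
    linarith

namespace HasSubexponentialMGF

variable {Ω Ω' ι : Type*} [MeasurableSpace Ω] [MeasurableSpace Ω'] [Fintype ι]
  {μ : Measure Ω} {X : Ω → ℝ} {m e V R : ℝ}

lemma mono (h : HasSubexponentialMGF X m e V R μ) {e' V' R' : ℝ} (he : e ≤ e') (hV : V ≤ V')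
    (hR : R ≤ R') : HasSubexponentialMGF X m e' V' R' μ where
  integrable_exp_mul s hs := h.integrable_exp_mul s (hs.trans' (by gcongr))
  mgf_le s hs := (h.mgf_le s (hs.trans' (by gcongr))).trans (by gcongr)

lemma const_mul (h : HasSubexponentialMGF X m e V R μ) (c : ℝ) :
    HasSubexponentialMGF (fun ω => c * X ω) (c * m) (|c| * e) (c ^ 2 * V) (|c| * R) μ where
  integrable_exp_mul s hs := by
    simpa only [mul_assoc] using h.integrable_exp_mul (s * c) (by rwa [abs_mul, mul_assoc])
  mgf_le s hs := by
    rw [mgf_const_mul]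
    refine (h.mgf_le (c * s) (by rw [abs_mul]; linarith)).trans_eq ?_
    rw [abs_mul]
    ring_nf

lemma neg (h : HasSubexponentialMGF X m e V R μ) :
    HasSubexponentialMGF (fun ω => -X ω) (-m) e V R μ := by
  simpa using h.const_mul (-1)

lemma comp (h : HasSubexponentialMGF X m e V R μ) {ν : Measure Ω'} {g : Ω' → Ω}
    (hg : MeasurePreserving g ν μ) : HasSubexponentialMGF (fun ω => X (g ω)) m e V R ν where
  integrable_exp_mul s hs := hg.integrable_comp_of_integrable (h.integrable_exp_mul s hs)
  mgf_le s hs := by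
    have hexp := (h.integrable_exp_mul s hs).aestronglyMeasurable
    have hmgf : mgf (fun ω => X (g ω)) ν s = mgf X μ s := by
      rw [← hg.map_eq] at hexp ⊢
      exact (integral_map hg.aemeasurable hexp).symm
    exact hmgf.trans_le (h.mgf_le s hs)

lemma sum_pi {α : ι → Type*} [∀ i, MeasurableSpace (α i)] {γ : ∀ i, Measure (α i)}
    [∀ i, IsFiniteMeasure (γ i)] {f : ∀ i, α i → ℝ} {m e V : ι → ℝ}
    (h : ∀ i, HasSubexponentialMGF (f i) (m i) (e i) (V i) R (γ i)) :
    HasSubexponentialMGF (fun x : ∀ i, α i => ∑ i, f i (x i)) (∑ i, m i) (∑ i, e i) (∑ i, V i) R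
      (Measure.pi γ) := by
  have hprod (s : ℝ) (x : ∀ i, α i) :
      Real.exp (s * ∑ i, f i (x i)) = ∏ i, Real.exp (s * f i (x i)) := by
    rw [Finset.mul_sum, Real.exp_sum]
  refine ⟨fun s hs => ?_, fun s hs => ?_⟩
  · simp only [hprod]
    exact Integrable.fintype_prod_dep fun i => (h i).integrable_exp_mul s hs
  · simp only [mgf, hprod]
    rw [integral_fintype_prod_eq_prod fun i y => Real.exp (s * f i y)]
    calc ∏ i, mgf (f i) (γ i) s
        ≤ ∏ i, Real.exp (s * m i + |s| * e i + s ^ 2 * V i) :=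
          Finset.prod_le_prod (fun _ _ => mgf_nonneg) fun i _ => (h i).mgf_le s hs
      _ = Real.exp (s * ∑ i, m i + |s| * ∑ i, e i + s ^ 2 * ∑ i, V i) := by
          simp only [← Real.exp_sum, Finset.mul_sum, Finset.sum_add_distrib]

lemma weighted_sum_pi [IsFiniteMeasure μ] (h : HasSubexponentialMGF X m e V R μ) (hR : 0 ≤ R)
    {w : ι → ℝ} {W : ℝ} (hW : ∀ i, |w i| ≤ W) :
    HasSubexponentialMGF (fun x : ι → Ω => ∑ i, w i * X (x i)) (m * ∑ i, w i) (e * ∑ i, |w i|)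
      (V * ∑ i, w i ^ 2) (W * R) (Measure.pi fun _ => μ) := by
  have hsum := sum_pi fun i => (h.const_mul (w i)).mono le_rfl le_rfl
    (mul_le_mul_of_nonneg_right (hW i) hR)
  simpa only [← Finset.sum_mul, mul_comm m, mul_comm e, mul_comm V] using hsum

variable [IsFiniteMeasure μ] {K : ℝ}

lemma measureReal_ge_le (h : HasSubexponentialMGF X m e V R μ) (hV : 0 ≤ V) (hR : 0 < R)
    (hK : 0 < K) :
    μ.real {ω | m + (e + 2 * √(K * V) + K * R) ≤ X ω} ≤ Real.exp (-K) := by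
  obtain ⟨l, hl, hlR, hle⟩ := exists_chernoff_parameter hK hV hR
  have hadm : |l| * R ≤ 1 := by rwa [abs_of_pos hl]
  refine (measure_ge_le_exp_mul_mgf _ hl.le (h.integrable_exp_mul l hadm)).trans ?_
  refine (mul_le_mul_of_nonneg_left (h.mgf_le l hadm) (Real.exp_pos _).le).trans ?_
  rw [← Real.exp_add, Real.exp_le_exp, abs_of_pos hl]
  have hscaled := mul_le_mul_of_nonneg_left hle hl.le
  rw [mul_add, mul_div_cancel₀ K hl.ne'] at hscaled
  linarith

lemma measure_gt_le (h : HasSubexponentialMGF X m e V R μ) (hV : 0 ≤ V) (hR : 0 ≤ R)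
    (hK : 0 < K) :
    μ {ω | m + (e + 2 * √(K * V) + K * R) < X ω} ≤ ENNReal.ofReal (Real.exp (-K)) := by
  set thr : ℕ → ℝ := fun k => m + (e + 2 * √(K * V) + K * (R + 1 / ((k : ℝ) + 1))) with hthr
  have hlim : Filter.Tendsto thr Filter.atTop (nhds (m + (e + 2 * √(K * V) + K * R))) := by
    simpa only [add_zero] using ((tendsto_one_div_add_atTop_nhds_zero_nat.const_add R).const_mul
      K).const_add (e + 2 * √(K * V)) |>.const_add m
  have hgt (k : ℕ) : m + (e + 2 * √(K * V) + K * R) < thr k := by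
    have : 0 < K * (1 / ((k : ℝ) + 1)) := by positivity
    simp only [hthr]
    linarith
  have hanti : Antitone thr := fun j k hjk => by simp only [hthr]; gcongr
  have hunion : {ω | m + (e + 2 * √(K * V) + K * R) < X ω} = ⋃ k, {ω | thr k ≤ X ω} := by
    ext ω
    have hmem := Set.ext_iff.1 (iUnion_Ici_eq_Ioi_of_lt_of_tendsto hgt hlim) (X ω)
    simpa only [Set.mem_iUnion, Set.mem_ofPred_eq, Set.mem_Ici, Set.mem_Ioi] using hmem.symm
  have hmono : Monotone fun k => {ω | thr k ≤ X ω} := fun j k hjk ω hω => (hanti hjk).trans hω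
  rw [hunion, hmono.measure_iUnion]
  refine iSup_le fun k => ?_
  rw [← ofReal_measureReal]
  have hpos : 0 < 1 / ((k : ℝ) + 1) := by positivity
  exact ENNReal.ofReal_le_ofReal
    ((h.mono le_rfl le_rfl (by linarith)).measureReal_ge_le hV (by linarith) hK)

lemma measure_abs_sub_gt_le (h : HasSubexponentialMGF X m e V R μ) (hV : 0 ≤ V) (hR : 0 ≤ R)
    (hK : 0 < K) :
    μ {ω | e + 2 * √(K * V) + K * R < |X ω - m|} ≤ 2 * ENNReal.ofReal (Real.exp (-K)) := by
  rw [two_mul (ENNReal.ofReal _)]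
  refine (measure_mono fun ω hω => ?_).trans ((measure_union_le _ _).trans
    (add_le_add (h.measure_gt_le hV hR hK) (h.neg.measure_gt_le hV hR hK)))
  refine (lt_abs.1 (show _ < |X ω - m| from hω)).imp (fun hpos => ?_) fun hneg => ?_
  · exact show m + _ < X ω by linarith
  · exact show -m + _ < -X ω by linarith

end HasSubexponentialMGF

lemma pow_four_le_exp_add_exp_neg (y : ℝ) : y ^ 4 ≤ 24 * (Real.exp y + Real.exp (-y)) := by
  have h := Real.pow_div_factorial_le_exp |y| (abs_nonneg y) 4
  rw [Even.pow_abs (by decide), show ((Nat.factorial 4 : ℕ) : ℝ) = 24 by norm_num [Nat.factorial],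
    div_le_iff₀ (by norm_num), mul_comm] at h
  exact h.trans (mul_le_mul_of_nonneg_left (Real.exp_abs_le y) (by norm_num))

lemma exp_le_one_add_add_sq_mul_exp_abs (x : ℝ) :
    Real.exp x ≤ 1 + x + x ^ 2 * Real.exp |x| := by
  have h := Complex.norm_exp_sub_sum_le_norm_mul_exp (x : ℂ) 2
  have hreal : Complex.exp x - ∑ m ∈ Finset.range 2, (x : ℂ) ^ m / (m.factorial : ℂ) =
      ((Real.exp x - (1 + x) : ℝ) : ℂ) := by
    simp [Finset.sum_range_succ]
  rw [hreal, Complex.norm_real, Complex.norm_real, Real.norm_eq_abs, Real.norm_eq_abs, sq_abs] at h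
  linarith [(abs_le.1 h).2]

section Truncation

variable {Ω : Type*} [MeasurableSpace Ω] {μ : Measure Ω} {X Q : Ω → ℝ}

lemma HasSubexponentialMGF.integrable_pow {m e V R : ℝ} (h : HasSubexponentialMGF X m e V R μ)
    {s : ℝ} (hs₀ : s ≠ 0) (hs : |s| * R ≤ 1) (k : ℕ) : Integrable (fun ω => X ω ^ k) μ :=
  integrable_pow_of_integrable_exp_mul hs₀ (h.integrable_exp_mul s hs)
    (h.integrable_exp_mul (-s) (by rwa [abs_neg])) k

lemma HasSubexponentialMGF.pow_four_mul_integral_le {V R : ℝ}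
    (h : HasSubexponentialMGF X 0 0 V R μ) {s : ℝ} (hs₀ : s ≠ 0) (hs : |s| * R ≤ 1) :
    s ^ 4 * ∫ ω, X ω ^ 4 ∂μ ≤ 48 * Real.exp (s ^ 2 * V) := by
  have hs' : |-s| * R ≤ 1 := by rwa [abs_neg]
  have hpos := h.integrable_exp_mul s hs
  have hneg := h.integrable_exp_mul (-s) hs'
  have hmgf := h.mgf_le s hs
  have hmgf' := h.mgf_le (-s) hs'
  simp only [mul_zero, zero_add, neg_sq] at hmgf hmgf'
  calc s ^ 4 * ∫ ω, X ω ^ 4 ∂μ = ∫ ω, (s * X ω) ^ 4 ∂μ := by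
        simp only [mul_pow, integral_const_mul]
    _ ≤ ∫ ω, 24 * (Real.exp (s * X ω) + Real.exp (-s * X ω)) ∂μ := by
        refine integral_mono ?_ ((hpos.add hneg).const_mul 24) fun ω => ?_
        · simpa only [mul_pow] using (h.integrable_pow hs₀ hs 4).const_mul (s ^ 4)
        · simpa only [neg_mul] using pow_four_le_exp_add_exp_neg (s * X ω)
    _ = 24 * (mgf X μ s + mgf X μ (-s)) := by
        rw [integral_const_mul, integral_add hpos hneg, mgf, mgf]
    _ ≤ 48 * Real.exp (s ^ 2 * V) := by linarith

lemma integral_abs_le_sqrt_of_sq_le [IsFiniteMeasure μ] (hX : Integrable X μ)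
    (hQ : Integrable Q μ) (hXQ : ∀ ω, X ω ^ 2 ≤ Q ω) :
    ∫ ω, |X ω| ∂μ ≤ √((∫ ω, Q ω ∂μ) * μ.real Set.univ) := by
  have hquad (t : ℝ) :
      0 ≤ μ.real Set.univ * (t * t) + -(2 * ∫ ω, |X ω| ∂μ) * t + ∫ ω, Q ω ∂μ := by
    have hmono : ∫ ω, 2 * t * |X ω| ∂μ ≤ ∫ ω, (Q ω + t * t) ∂μ :=
      integral_mono (hX.abs.const_mul _) (hQ.add (integrable_const _)) fun ω => by
        nlinarith [sq_nonneg (|X ω| - t), sq_abs (X ω), hXQ ω]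
    rw [integral_const_mul, integral_add hQ (integrable_const _), integral_const,
      smul_eq_mul] at hmono
    linarith
  have hdiscrim := discrim_le_zero hquad
  rw [discrim] at hdiscrim
  exact Real.le_sqrt_of_sq_le (by linarith)

variable [IsProbabilityMeasure μ] {G : Set Ω}

lemma setIntegral_le_integral_add_sqrt (hG : MeasurableSet G) (hX : Integrable X μ)
    (hQ : Integrable Q μ) (hXQ : ∀ ω, X ω ^ 2 ≤ Q ω) (s : ℝ) :
    s * ∫ ω in G, X ω ∂μ ≤ s * ∫ ω, X ω ∂μ + |s| * √((∫ ω, Q ω ∂μ) * μ.real Gᶜ) := by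
  have hcompl : |∫ ω in Gᶜ, X ω ∂μ| ≤ √((∫ ω, Q ω ∂μ) * μ.real Gᶜ) := by
    refine abs_integral_le_integral_abs.trans
      ((integral_abs_le_sqrt_of_sq_le hX.restrict hQ.restrict hXQ).trans ?_)
    rw [measureReal_restrict_apply_univ]
    refine Real.sqrt_le_sqrt (mul_le_mul_of_nonneg_right ?_ measureReal_nonneg)
    exact setIntegral_le_integral hQ
      (Filter.Eventually.of_forall fun ω => (sq_nonneg _).trans (hXQ ω))
  have hloss := (neg_le_abs _).trans_eq (abs_mul s (∫ ω in Gᶜ, X ω ∂μ))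
  have hloss' := mul_le_mul_of_nonneg_left hcompl (abs_nonneg s)
  rw [← integral_add_compl hG hX, mul_add]
  linarith

lemma hasSubexponentialMGF_restrict {R : ℝ} (hG : MeasurableSet G) (hX : Integrable X μ)
    (hQ : Integrable Q μ) (hXQ : ∀ ω, X ω ^ 2 ≤ Q ω)
    (hexp : ∀ ω ∈ G, ∀ s, |s| * R ≤ 1 → X ω ^ 2 * Real.exp |s * X ω| ≤ Q ω) :
    HasSubexponentialMGF X (∫ ω, X ω ∂μ) √((∫ ω, Q ω ∂μ) * μ.real Gᶜ) (∫ ω, Q ω ∂μ) R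
      (μ.restrict G) := by
  have haffine (s : ℝ) : Integrable (fun ω => 1 + s * X ω) (μ.restrict G) :=
    (integrable_const _).add (hX.restrict.const_mul s)
  have hquad (s : ℝ) : Integrable (fun ω => s ^ 2 * Q ω) (μ.restrict G) :=
    hQ.restrict.const_mul (s ^ 2)
  have hle (s : ℝ) (hs : |s| * R ≤ 1) :
      ∀ᵐ ω ∂μ.restrict G, Real.exp (s * X ω) ≤ 1 + s * X ω + s ^ 2 * Q ω := by
    refine (ae_restrict_iff' hG).2 (Filter.Eventually.of_forall fun ω hω => ?_)
    nlinarith [exp_le_one_add_add_sq_mul_exp_abs (s * X ω),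
      mul_le_mul_of_nonneg_left (hexp ω hω s hs) (sq_nonneg s)]
  have hint (s : ℝ) (hs : |s| * R ≤ 1) :
      Integrable (fun ω => Real.exp (s * X ω)) (μ.restrict G) := by
    refine ((haffine s).add (hquad s)).mono'
      (hX.restrict.aemeasurable.const_mul s).exp.aestronglyMeasurable ?_
    filter_upwards [hle s hs] with ω hω
    rwa [Real.norm_of_nonneg (Real.exp_pos _).le]
  refine ⟨hint, fun s hs =>
    (integral_mono_ae (hint s hs) ((haffine s).add (hquad s)) (hle s hs)).trans ?_⟩
  simp only [Pi.add_apply]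
  rw [integral_add (haffine s) (hquad s), integral_add (integrable_const _)
    (hX.restrict.const_mul s), integral_const_mul, integral_const_mul, integral_const,
    measureReal_restrict_apply_univ, smul_eq_mul, mul_one]
  have hQG : ∫ ω in G, Q ω ∂μ ≤ ∫ ω, Q ω ∂μ := setIntegral_le_integral hQ
    (Filter.Eventually.of_forall fun ω => (sq_nonneg _).trans (hXQ ω))
  nlinarith [Real.add_one_le_exp (s * ∫ ω, X ω ∂μ + |s| * √((∫ ω, Q ω ∂μ) * μ.real Gᶜ)
    + s ^ 2 * ∫ ω, Q ω ∂μ), setIntegral_le_integral_add_sqrt hG hX hQ hXQ s, sq_nonneg s,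
    measureReal_le_one (μ := μ) (s := G), mul_le_mul_of_nonneg_left hQG (sq_nonneg s)]

end Truncation

lemma integrable_exp_mul_sq_gaussianReal {c : ℝ} (hc : c < 1 / 2) :
    Integrable (fun x => Real.exp (c * x ^ 2)) (gaussianReal 0 1) := by
  rw [gaussianReal_of_var_ne_zero 0 one_ne_zero,
    integrable_withDensity_iff_integrable_smul' (measurable_gaussianPDF 0 1)
      (Filter.Eventually.of_forall fun _ => gaussianPDF_lt_top)]
  have h := (integrable_exp_neg_mul_sq (show 0 < 1 / 2 - c by linarith)).const_mul
    ((√(2 * Real.pi))⁻¹)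
  refine h.congr (Filter.Eventually.of_forall fun x => ?_)
  simp only [toReal_gaussianPDF, gaussianPDFReal, smul_eq_mul, NNReal.coe_one, mul_one, sub_zero]
  rw [mul_assoc, ← Real.exp_add]
  ring_nf

lemma integral_exp_mul_sq_gaussianReal {c : ℝ} (hc : c < 1 / 2) :
    ∫ x, Real.exp (c * x ^ 2) ∂gaussianReal 0 1 = (√(1 - 2 * c))⁻¹ := by
  have hdensity (x : ℝ) : gaussianPDFReal 0 1 x • Real.exp (c * x ^ 2) =
      (√(2 * Real.pi))⁻¹ * Real.exp (-(1 / 2 - c) * x ^ 2) := by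
    simp only [gaussianPDFReal, smul_eq_mul, NNReal.coe_one, mul_one, sub_zero]
    rw [mul_assoc, ← Real.exp_add]
    ring_nf
  rw [integral_gaussianReal_eq_integral_smul one_ne_zero]
  simp_rw [hdensity]
  rw [integral_const_mul, integral_gaussian, ← Real.sqrt_inv, ← Real.sqrt_inv,
    ← Real.sqrt_mul (by positivity)]
  have : 1 / 2 - c ≠ 0 := by linarith
  have : 1 - 2 * c ≠ 0 := by linarith
  field_simp

lemma exp_neg_mul_inv_sqrt_le {s : ℝ} (hs : |s| * 4 ≤ 1) :
    Real.exp (-s) * (√(1 - 2 * s))⁻¹ ≤ Real.exp (4 * s ^ 2) := by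
  have habs : |2 * s| ≤ 1 / 2 := by rw [abs_mul, abs_two]; linarith
  have hpos : 0 < 1 - 2 * s := by linarith [(abs_le.1 habs).2]
  have hremainder : |2 * s| ^ (1 + 1) / (1 - |2 * s|) ≤ 8 * s ^ 2 := by
    rw [div_le_iff₀ (by linarith), sq_abs]
    nlinarith [sq_nonneg s]
  have hlog := (abs_le.1 ((Real.abs_log_sub_add_sum_range_le (x := 2 * s) (by linarith) 1).trans
    hremainder)).1
  simp only [Finset.sum_range_one, zero_add, pow_one, Nat.cast_zero, div_one] at hlog
  rw [← Real.sqrt_inv, ← Real.exp_log (inv_pos.2 hpos), Real.log_inv, ← Real.exp_half,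
    ← Real.exp_add, Real.exp_le_exp]
  linarith

lemma hasSubexponentialMGF_sq_sub_one_gaussianReal :
    HasSubexponentialMGF (fun x : ℝ => x ^ 2 - 1) 0 0 4 4 (gaussianReal 0 1) := by
  have hsplit (s x : ℝ) :
      Real.exp (s * (x ^ 2 - 1)) = Real.exp (-s) * Real.exp (s * x ^ 2) := by
    rw [← Real.exp_add]
    ring_nf
  have hlt {s : ℝ} (hs : |s| * 4 ≤ 1) : s < 1 / 2 := by linarith [le_abs_self s]
  refine ⟨fun s hs => ?_, fun s hs => ?_⟩
  · simp only [hsplit]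
    exact (integrable_exp_mul_sq_gaussianReal (hlt hs)).const_mul _
  · simp only [mgf, hsplit]
    rw [integral_const_mul, integral_exp_mul_sq_gaussianReal (hlt hs)]
    refine (exp_neg_mul_inv_sqrt_le hs).trans_eq ?_
    ring_nf

lemma hasSubexponentialMGF_id_gaussianReal :
    HasSubexponentialMGF (fun x : ℝ => x) 0 0 (1 / 2) 0 (gaussianReal 0 1) where
  integrable_exp_mul s _ := integrable_exp_mul_gaussianReal s
  mgf_le s _ := by
    rw [mgf_fun_id_gaussianReal]
    simp only [NNReal.coe_one, zero_mul, mul_zero, zero_add, one_mul]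
    exact (congrArg Real.exp (by ring)).le

lemma integrable_pow_gaussianReal (k : ℕ) :
    Integrable (fun x : ℝ => x ^ k) (gaussianReal 0 1) :=
  hasSubexponentialMGF_id_gaussianReal.integrable_pow one_ne_zero (by norm_num) k

lemma iteratedDeriv_exp_sq_half_add_two (k : ℕ) (t : ℝ) :
    iteratedDeriv (k + 2) (fun t : ℝ => Real.exp (t ^ 2 / 2)) t =
      t * iteratedDeriv (k + 1) (fun t : ℝ => Real.exp (t ^ 2 / 2)) t +
        (k + 1) * iteratedDeriv k (fun t : ℝ => Real.exp (t ^ 2 / 2)) t := by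
  set f : ℝ → ℝ := fun t => Real.exp (t ^ 2 / 2) with hf
  have hderiv (j : ℕ) (t : ℝ) :
      HasDerivAt (iteratedDeriv j f) (iteratedDeriv (j + 1) f t) t := by
    have hsmooth : ContDiff ℝ (j + 1) f := by fun_prop
    rw [iteratedDeriv_succ]
    exact (hsmooth.differentiable_iteratedDeriv j (by exact_mod_cast j.lt_succ_self) t).hasDerivAt
  have hfirst : iteratedDeriv 1 f = fun t => t * iteratedDeriv 0 f t := by
    funext t
    rw [iteratedDeriv_one, iteratedDeriv_zero]
    exact (((hasDerivAt_pow 2 t).div_const 2).exp.congr_deriv (by simp [hf]; ring)).deriv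
  induction k generalizing t with
  | zero =>
    rw [iteratedDeriv_succ, hfirst, ((hasDerivAt_id' t).fun_mul (hderiv 0 t)).deriv]
    simp only [zero_add, hfirst]
    push_cast
    ring
  | succ k ih =>
    rw [iteratedDeriv_succ, funext ih, (((hasDerivAt_id' t).fun_mul (hderiv (k + 1) t)).fun_add
      ((hderiv k t).const_mul ((k : ℝ) + 1))).deriv]
    push_cast
    linear_combination t * ih t

lemma integral_pow_add_two_gaussianReal (k : ℕ) :
    ∫ x, x ^ (k + 2) ∂gaussianReal 0 1 = (k + 1) * ∫ x, x ^ k ∂gaussianReal 0 1 := by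
  have hmoment (j : ℕ) : ∫ x, x ^ j ∂gaussianReal 0 1 =
      iteratedDeriv j (fun t : ℝ => Real.exp (t ^ 2 / 2)) 0 := by
    have h := iteratedDeriv_mgf_zero (X := id) (μ := gaussianReal 0 1) (by
      rw [integrableExpSet_id_gaussianReal, interior_univ]; trivial) j
    rw [mgf_id_gaussianReal] at h
    simpa using h.symm
  rw [hmoment, hmoment, iteratedDeriv_exp_sq_half_add_two, zero_mul, zero_add]

/-- The centred chi-squared variable `‖x‖² - d` of a vector `x ∈ ℝ^d`. -/
def normSqDev {d : ℕ} (x : Fin d → ℝ) : ℝ := ∑ j, (x j ^ 2 - 1)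

@[fun_prop]
lemma measurable_normSqDev {d : ℕ} : Measurable (normSqDev (d := d)) := by
  unfold normSqDev
  fun_prop

lemma hasSubexponentialMGF_normSqDev (d : ℕ) :
    HasSubexponentialMGF normSqDev 0 0 (4 * d) 4 (gaussVec d 1) := by
  have hsum := HasSubexponentialMGF.sum_pi (ι := Fin d)
    fun _ => hasSubexponentialMGF_sq_sub_one_gaussianReal
  simp only [Finset.sum_const, Finset.card_univ, Fintype.card_fin, nsmul_eq_mul, mul_zero] at hsum
  rwa [mul_comm]

lemma measure_abs_normSqDev_gt_le (d : ℕ) {L : ℝ} (hL : 0 < L) :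
    gaussVec d 1 {x | 8 * (√(d * L) + L) < |normSqDev x|} ≤
      2 * ENNReal.ofReal (Real.exp (-(2 * L))) := by
  have htail := (hasSubexponentialMGF_normSqDev d).measure_abs_sub_gt_le (by positivity)
    (by norm_num) (K := 2 * L) (by linarith)
  refine (measure_mono fun x hx => ?_).trans htail
  have hsqrt : √(2 * L * (4 * d)) ≤ 4 * √(d * L) := by
    rw [Real.sqrt_le_left (by positivity), mul_pow, Real.sq_sqrt (by positivity)]
    nlinarith [show 0 ≤ (d : ℝ) * L by positivity]
  simp only [Set.mem_ofPred_eq, sub_zero] at hx ⊢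
  linarith

lemma integral_normSqDev_pow_four_le {d : ℕ} (hd : 1 ≤ d) :
    ∫ x, normSqDev x ^ 4 ∂gaussVec d 1 ≤ 18432 * (d : ℝ) ^ 2 := by
  have hd' : (1 : ℝ) ≤ d := by exact_mod_cast hd
  have hs : |1 / (4 * √(d : ℝ))| * 4 ≤ 1 := by
    rw [abs_of_pos (by positivity), div_mul_eq_mul_div, div_le_one (by positivity)]
    linarith [Real.one_le_sqrt.2 hd']
  have hs₂ : (1 / (4 * √(d : ℝ))) ^ 2 = 1 / (16 * d) := by
    rw [div_pow, mul_pow, Real.sq_sqrt (by positivity)]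
    norm_num
  have hmoment := (hasSubexponentialMGF_normSqDev d).pow_four_mul_integral_le (by positivity) hs
  have hexp : Real.exp (1 / 4) ≤ 3 / 2 := by
    have := Real.exp_bound_div_one_sub_of_interval' (x := 1 / 4) (by norm_num) (by norm_num)
    linarith
  rw [show (1 / (4 * √(d : ℝ))) ^ 4 = ((1 / (4 * √(d : ℝ))) ^ 2) ^ 2 by ring, hs₂,
    show 1 / (16 * (d : ℝ)) * (4 * d) = 1 / 4 by field_simp; norm_num, div_pow, one_pow,
    one_div_mul_eq_div, div_le_iff₀ (by positivity)] at hmoment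
  nlinarith [sq_nonneg (d : ℝ)]

section ProductMoments

variable {d : ℕ}

lemma integrable_comp_eval_gaussVec {f : ℝ → ℝ} (hf : Integrable f (gaussianReal 0 1))
    (i : Fin d) : Integrable (fun x => f (x i)) (gaussVec d 1) :=
  integrable_comp_eval (μ := fun _ : Fin d => gaussianReal 0 1) hf

lemma integral_comp_eval_gaussVec {f : ℝ → ℝ} (hf : AEStronglyMeasurable f (gaussianReal 0 1))
    (i : Fin d) : ∫ x, f (x i) ∂gaussVec d 1 = ∫ y, f y ∂gaussianReal 0 1 :=
  integral_comp_eval (μ := fun _ : Fin d => gaussianReal 0 1) hf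

lemma gaussVec_indepFun_pow {j i : Fin d} (hji : j ≠ i) (k : ℕ) :
    IndepFun (fun x : Fin d → ℝ => x j ^ 2 - 1) (fun x => x i ^ k) (gaussVec d 1) :=
  ((iIndepFun_pi (X := fun _ => id) fun _ => aemeasurable_id).indepFun hji).comp
    (φ := fun y : ℝ => y ^ 2 - 1) (ψ := fun y : ℝ => y ^ k) (by fun_prop) (by fun_prop)

lemma integrable_sq_sub_one_mul_pow_self (k : ℕ) :
    Integrable (fun y : ℝ => (y ^ 2 - 1) * y ^ k) (gaussianReal 0 1) := by
  simp only [sub_mul, one_mul, ← pow_add]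
  exact (integrable_pow_gaussianReal (2 + k)).sub (integrable_pow_gaussianReal k)

lemma integral_sq_sub_one_mul_pow_self (k : ℕ) :
    ∫ y : ℝ, (y ^ 2 - 1) * y ^ k ∂gaussianReal 0 1 = k * ∫ y, y ^ k ∂gaussianReal 0 1 := by
  simp only [sub_mul, one_mul, ← pow_add]
  rw [integral_sub (integrable_pow_gaussianReal _) (integrable_pow_gaussianReal _), add_comm 2,
    integral_pow_add_two_gaussianReal]
  ring

lemma integrable_sq_sub_one_mul_pow (j i : Fin d) (k : ℕ) :
    Integrable (fun x : Fin d → ℝ => (x j ^ 2 - 1) * x i ^ k) (gaussVec d 1) := by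
  rcases eq_or_ne j i with rfl | hji
  · exact integrable_comp_eval_gaussVec (integrable_sq_sub_one_mul_pow_self k) j
  · refine (gaussVec_indepFun_pow hji k).integrable_mul ?_
      (integrable_comp_eval_gaussVec (integrable_pow_gaussianReal k) i)
    exact integrable_comp_eval_gaussVec (f := fun y : ℝ => y ^ 2 - 1)
      ((integrable_pow_gaussianReal 2).sub (integrable_const 1)) j

lemma integral_sq_sub_one_mul_pow (j i : Fin d) (k : ℕ) :
    ∫ x, (x j ^ 2 - 1) * x i ^ k ∂gaussVec d 1 =
      if j = i then k * ∫ y, y ^ k ∂gaussianReal 0 1 else 0 := by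
  split_ifs with hji
  · subst hji
    rw [← integral_sq_sub_one_mul_pow_self]
    exact integral_comp_eval_gaussVec
      (integrable_sq_sub_one_mul_pow_self k).aestronglyMeasurable j
  · have hmean : ∫ x, (x j ^ 2 - 1) ∂gaussVec d 1 = 0 := by
      refine (integral_comp_eval_gaussVec (f := fun y : ℝ => y ^ 2 - 1) (by fun_prop) j).trans ?_
      simpa using integral_sq_sub_one_mul_pow_self 0
    rw [(gaussVec_indepFun_pow hji k).integral_fun_mul_eq_mul_integral
      (by fun_prop : Measurable _).aestronglyMeasurable
      (by fun_prop : Measurable _).aestronglyMeasurable, hmean, zero_mul]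

lemma integrable_normSqDev_mul_pow (i : Fin d) (k : ℕ) :
    Integrable (fun x => normSqDev x * x i ^ k) (gaussVec d 1) := by
  simp only [normSqDev, Finset.sum_mul]
  exact integrable_finsetSum _ fun j _ => integrable_sq_sub_one_mul_pow j i k

lemma integral_normSqDev_mul_pow (i : Fin d) (k : ℕ) :
    ∫ x, normSqDev x * x i ^ k ∂gaussVec d 1 = k * ∫ y, y ^ k ∂gaussianReal 0 1 := by
  simp only [normSqDev, Finset.sum_mul]
  rw [integral_finsetSum _ fun j _ => integrable_sq_sub_one_mul_pow j i k]
  simp only [integral_sq_sub_one_mul_pow, Finset.sum_ite_eq', Finset.mem_univ, if_true]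

lemma integrable_exp_sq_div_four (i : Fin d) :
    Integrable (fun x : Fin d → ℝ => Real.exp (1 / 4 * x i ^ 2)) (gaussVec d 1) :=
  integrable_comp_eval_gaussVec (f := fun y : ℝ => Real.exp (1 / 4 * y ^ 2))
    (integrable_exp_mul_sq_gaussianReal (by norm_num)) i

lemma integral_exp_sq_div_four_le (i : Fin d) :
    ∫ x : Fin d → ℝ, Real.exp (1 / 4 * x i ^ 2) ∂gaussVec d 1 ≤ 2 := by
  refine (integral_comp_eval_gaussVec (f := fun y : ℝ => Real.exp (1 / 4 * y ^ 2))
    (by fun_prop) i).trans_le ?_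
  rw [integral_exp_mul_sq_gaussianReal (by norm_num), inv_le_comm₀ (by positivity) (by norm_num)]
  exact Real.le_sqrt_of_sq_le (by norm_num)

lemma normSqDev_sq_mul_exp_le (x : Fin d → ℝ) (i : Fin d) {c : ℝ} (hc : 0 < c) :
    normSqDev x ^ 2 * Real.exp (x i ^ 2 / 8) ≤
      (2 * c)⁻¹ * normSqDev x ^ 4 + c / 2 * Real.exp (1 / 4 * x i ^ 2) := by
  have hsq : Real.exp (1 / 4 * x i ^ 2) = Real.exp (x i ^ 2 / 8) ^ 2 := by
    rw [← Real.exp_nat_mul]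
    ring_nf
  rw [hsq, inv_mul_eq_div, div_add' _ _ _ (by positivity), le_div_iff₀ (by positivity)]
  nlinarith [sq_nonneg (normSqDev x ^ 2 - c * Real.exp (x i ^ 2 / 8))]

lemma integrable_normSqDev_pow_four : Integrable (fun x => normSqDev x ^ 4) (gaussVec d 1) :=
  (hasSubexponentialMGF_normSqDev d).integrable_pow (s := 1 / 4) (by norm_num) (by norm_num) 4

lemma integrable_normSqDev_sq_mul_exp (i : Fin d) :
    Integrable (fun x => normSqDev x ^ 2 * Real.exp (x i ^ 2 / 8)) (gaussVec d 1) := by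
  refine ((integrable_normSqDev_pow_four.const_mul (2 * 1)⁻¹).add
    ((integrable_exp_sq_div_four i).const_mul (1 / 2))).mono' (by fun_prop)
    (Filter.Eventually.of_forall fun x => ?_)
  rw [Real.norm_of_nonneg (by positivity)]
  exact normSqDev_sq_mul_exp_le x i one_pos

lemma integral_normSqDev_sq_mul_exp_le (i : Fin d) :
    ∫ x, normSqDev x ^ 2 * Real.exp (x i ^ 2 / 8) ∂gaussVec d 1 ≤ 256 * d := by
  have hd : (1 : ℝ) ≤ d := by exact_mod_cast (i.pos : 1 ≤ d)
  have hdev := (integrable_normSqDev_pow_four (d := d)).const_mul (2 * (128 * d : ℝ))⁻¹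
  have hexp := (integrable_exp_sq_div_four i).const_mul (128 * d / 2 : ℝ)
  calc ∫ x, normSqDev x ^ 2 * Real.exp (x i ^ 2 / 8) ∂gaussVec d 1
      ≤ ∫ x, ((2 * (128 * d : ℝ))⁻¹ * normSqDev x ^ 4 +
          128 * d / 2 * Real.exp (1 / 4 * x i ^ 2)) ∂gaussVec d 1 :=
        integral_mono (integrable_normSqDev_sq_mul_exp i) (hdev.add hexp)
          fun x => normSqDev_sq_mul_exp_le x i (by positivity)
    _ = (2 * (128 * d : ℝ))⁻¹ * ∫ x, normSqDev x ^ 4 ∂gaussVec d 1 +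
          128 * d / 2 * ∫ x, Real.exp (1 / 4 * x i ^ 2) ∂gaussVec d 1 := by
        rw [integral_add hdev hexp, integral_const_mul, integral_const_mul]
    _ ≤ (2 * (128 * d : ℝ))⁻¹ * (18432 * (d : ℝ) ^ 2) + 128 * d / 2 * 2 := by
        gcongr
        · exact integral_normSqDev_pow_four_le i.pos
        · exact integral_exp_sq_div_four_le i
    _ ≤ 256 * d := by
        field_simp
        norm_num

end ProductMoments

lemma sq_mul_exp_abs_le (x : ℝ) :
    x ^ 2 * Real.exp (|x| / 16) ≤ 512 * Real.exp (x ^ 2 / 8) := by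
  have hsq : x ^ 2 ≤ 16 * Real.exp (x ^ 2 / 16) := by
    linarith [Real.add_one_le_exp (x ^ 2 / 16)]
  have habs : |x| / 16 ≤ x ^ 2 / 16 + 1 := by nlinarith [sq_nonneg (|x| - 1), sq_abs x]
  calc x ^ 2 * Real.exp (|x| / 16)
      ≤ (16 * Real.exp (x ^ 2 / 16)) * Real.exp (x ^ 2 / 16 + 1) := by gcongr
    _ = 16 * Real.exp 1 * Real.exp (x ^ 2 / 8) := by
      rw [show x ^ 2 / 8 = x ^ 2 / 16 + x ^ 2 / 16 by ring, Real.exp_add, Real.exp_add]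
      ring
    _ ≤ 512 * Real.exp (x ^ 2 / 8) := by
      gcongr
      linarith [Real.exp_one_lt_d9]

lemma sq_sq_mul_exp_abs_le (x : ℝ) :
    (x ^ 2) ^ 2 * Real.exp (|x ^ 2| / 16) ≤ 512 * Real.exp (x ^ 2 / 8) := by
  have hquad := Real.quadratic_le_exp_of_nonneg (x := x ^ 2 / 16) (by positivity)
  have hfour : (x ^ 2) ^ 2 ≤ 512 * Real.exp (x ^ 2 / 16) := by nlinarith [sq_nonneg x]
  rw [abs_of_nonneg (sq_nonneg x)]
  calc (x ^ 2) ^ 2 * Real.exp (x ^ 2 / 16)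
      ≤ (512 * Real.exp (x ^ 2 / 16)) * Real.exp (x ^ 2 / 16) := by gcongr
    _ = 512 * Real.exp (x ^ 2 / 8) := by rw [mul_assoc, ← Real.exp_add]; ring_nf

lemma hasSubexponentialMGF_normSqDev_mul {d : ℕ} (i : Fin d) {φ : ℝ → ℝ}
    (hφ : ∀ y, φ y ^ 2 * Real.exp (|φ y| / 16) ≤ 512 * Real.exp (y ^ 2 / 8))
    (hint : Integrable (fun x => normSqDev x * φ (x i)) (gaussVec d 1)) {T : ℝ} :
    HasSubexponentialMGF (fun x => normSqDev x * φ (x i))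
      (∫ x, normSqDev x * φ (x i) ∂gaussVec d 1)
      √(2 ^ 17 * d * (gaussVec d 1).real {x | |normSqDev x| ≤ T}ᶜ) (2 ^ 17 * d) (16 * T)
      ((gaussVec d 1).restrict {x | |normSqDev x| ≤ T}) := by
  set Q : (Fin d → ℝ) → ℝ := fun x => 512 * (normSqDev x ^ 2 * Real.exp (x i ^ 2 / 8)) with hQ
  have hQint : Integrable Q (gaussVec d 1) := (integrable_normSqDev_sq_mul_exp i).const_mul 512
  have hQle : ∫ x, Q x ∂gaussVec d 1 ≤ 2 ^ 17 * d := by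
    rw [integral_const_mul]
    linarith [integral_normSqDev_sq_mul_exp_le i]
  have hexp (x : Fin d → ℝ) :
      (normSqDev x * φ (x i)) ^ 2 * Real.exp (|φ (x i)| / 16) ≤ Q x := by
    have := mul_le_mul_of_nonneg_left (hφ (x i)) (sq_nonneg (normSqDev x))
    simp only [hQ]
    linarith
  refine (hasSubexponentialMGF_restrict (Q := Q) (measurableSet_le (by fun_prop) (by fun_prop))
    hint hQint (fun x => ?_) fun x hx s hs => ?_).mono (by gcongr) hQle le_rfl
  · exact (le_mul_of_one_le_right (sq_nonneg _) (Real.one_le_exp (by positivity))).trans (hexp x)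
  · refine (mul_le_mul_of_nonneg_left (Real.exp_le_exp.2 ?_) (sq_nonneg _)).trans (hexp x)
    have hsx : |s| * |normSqDev x| ≤ |s| * T := mul_le_mul_of_nonneg_left hx (abs_nonneg s)
    rw [abs_mul, abs_mul]
    nlinarith [abs_nonneg (φ (x i))]

section TruncatedProducts

variable {d : ℕ} (i : Fin d) {L : ℝ}

lemma truncation_bias_le (hL : 0 < L) :
    √(2 ^ 17 * d * (gaussVec d 1).real {x | |normSqDev x| ≤ 8 * (√(d * L) + L)}ᶜ) ≤
      512 * √d * Real.exp (-L) := by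
  have htail : (gaussVec d 1).real {x | |normSqDev x| ≤ 8 * (√(d * L) + L)}ᶜ ≤
      2 * Real.exp (-(2 * L)) := by
    have hcompl : {x : Fin d → ℝ | |normSqDev x| ≤ 8 * (√(d * L) + L)}ᶜ =
        {x | 8 * (√(d * L) + L) < |normSqDev x|} := by
      ext x
      simp
    rw [hcompl, measureReal_def]
    refine (ENNReal.toReal_mono (by finiteness) (measure_abs_normSqDev_gt_le d hL)).trans_eq ?_
    rw [ENNReal.toReal_mul, ENNReal.toReal_ofReal (Real.exp_pos _).le, ENNReal.toReal_ofNat]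
  have hexp : Real.exp (-(2 * L)) = Real.exp (-L) ^ 2 := by
    rw [← Real.exp_nat_mul]
    ring_nf
  rw [Real.sqrt_le_left (by positivity), mul_pow, mul_pow, Real.sq_sqrt (by positivity), ← hexp]
  nlinarith [mul_le_mul_of_nonneg_left htail (Nat.cast_nonneg (α := ℝ) d)]

lemma hasSubexponentialMGF_normSqDev_mul_coord (hL : 0 < L) :
    HasSubexponentialMGF (fun x => normSqDev x * x i) 0 (512 * √d * Real.exp (-L)) (2 ^ 17 * d)
      (16 * (8 * (√(d * L) + L)))
      ((gaussVec d 1).restrict {x | |normSqDev x| ≤ 8 * (√(d * L) + L)}) := by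
  have hmean := integral_normSqDev_mul_pow i 1
  simp only [pow_one, integral_id_gaussianReal, mul_zero] at hmean
  have h := hasSubexponentialMGF_normSqDev_mul i (φ := fun y => y)
    (T := 8 * (√(d * L) + L)) sq_mul_exp_abs_le
    (by simpa only [pow_one] using integrable_normSqDev_mul_pow i 1)
  rw [hmean] at h
  exact h.mono (truncation_bias_le hL) le_rfl le_rfl

lemma hasSubexponentialMGF_normSqDev_mul_coord_sq (hL : 0 < L) :
    HasSubexponentialMGF (fun x => normSqDev x * x i ^ 2) 2 (512 * √d * Real.exp (-L))
      (2 ^ 17 * d) (16 * (8 * (√(d * L) + L)))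
      ((gaussVec d 1).restrict {x | |normSqDev x| ≤ 8 * (√(d * L) + L)}) := by
  have hmean : ∫ x, normSqDev x * x i ^ 2 ∂gaussVec d 1 = 2 := by
    rw [integral_normSqDev_mul_pow, integral_pow_add_two_gaussianReal 0]
    simp
  have h := hasSubexponentialMGF_normSqDev_mul i (φ := fun y => y ^ 2)
    (T := 8 * (√(d * L) + L)) sq_sq_mul_exp_abs_le (integrable_normSqDev_mul_pow i 2)
  rw [hmean] at h
  exact h.mono (truncation_bias_le hL) le_rfl le_rfl

end TruncatedProducts

section Rotation

variable {d : ℕ}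

lemma measurePreserving_toLp_gaussVec (d : ℕ) :
    MeasurePreserving (WithLp.toLp 2) (gaussVec d 1) (stdGaussian (EuclideanSpace ℝ (Fin d))) :=
  ⟨by fun_prop, map_pi_eq_stdGaussian⟩

lemma measurePreserving_linearIsometryEquiv_gaussVec
    (f : EuclideanSpace ℝ (Fin d) ≃ₗᵢ[ℝ] EuclideanSpace ℝ (Fin d)) :
    MeasurePreserving (fun x => WithLp.ofLp (f (WithLp.toLp 2 x))) (gaussVec d 1)
      (gaussVec d 1) := by
  have hto := measurePreserving_toLp_gaussVec d
  have hof : MeasurePreserving WithLp.ofLp (stdGaussian (EuclideanSpace ℝ (Fin d)))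
      (gaussVec d 1) := hto.symm (MeasurableEquiv.toLp 2 (Fin d → ℝ))
  exact hof.comp ((⟨f.continuous.measurable, stdGaussian_map f⟩ : MeasurePreserving f _ _).comp hto)

lemma exists_measurePreserving_rotation {u : EuclideanSpace ℝ (Fin d)} (hu : ‖u‖ = 1) :
    ∃ (i : Fin d) (f : (Fin d → ℝ) → Fin d → ℝ), MeasurePreserving f (gaussVec d 1)
      (gaussVec d 1) ∧ (∀ x, normSqDev (f x) = normSqDev x) ∧ ∀ x, f x i = u.ofLp ⬝ᵥ x := by
  obtain ⟨i⟩ : Nonempty (Fin d) := by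
    by_contra h
    rw [not_nonempty_iff] at h
    simp [Subsingleton.elim u 0] at hu
  obtain ⟨b, hb⟩ := Orthonormal.exists_orthonormalBasis_extension_of_card_eq
    (𝕜 := ℝ) (E := EuclideanSpace ℝ (Fin d)) (ι := Fin d) (by simp) (v := fun _ => u)
    (s := {i}) (by simp [hu])
  have hnorm (x : Fin d → ℝ) : ∑ j, b.repr (WithLp.toLp 2 x) j ^ 2 = ∑ j, x j ^ 2 := by
    rw [← EuclideanSpace.real_norm_sq_eq, b.repr.norm_map, EuclideanSpace.real_norm_sq_eq]
  refine ⟨i, _, measurePreserving_linearIsometryEquiv_gaussVec b.repr, fun x => ?_, fun x => ?_⟩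
  · simp only [normSqDev, Finset.sum_sub_distrib, hnorm]
  · rw [b.repr_apply_apply, hb i rfl, EuclideanSpace.inner_eq_star_dotProduct]
    exact dotProduct_comm _ _

variable {u : EuclideanSpace ℝ (Fin d)}

lemma hasSubexponentialMGF_dotProduct (hu : ‖u‖ = 1) :
    HasSubexponentialMGF (fun x => u.ofLp ⬝ᵥ x) 0 0 (1 / 2) 0 (gaussVec d 1) := by
  obtain ⟨i, f, hf, -, hfi⟩ := exists_measurePreserving_rotation hu
  have h := hasSubexponentialMGF_id_gaussianReal.comp
    ((measurePreserving_eval (fun _ : Fin d => gaussianReal 0 1) i).comp hf)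
  simpa only [Function.comp_def, hfi] using h

lemma hasSubexponentialMGF_dotProduct_sq_sub_one (hu : ‖u‖ = 1) :
    HasSubexponentialMGF (fun x => (u.ofLp ⬝ᵥ x) ^ 2 - 1) 0 0 4 4 (gaussVec d 1) := by
  obtain ⟨i, f, hf, -, hfi⟩ := exists_measurePreserving_rotation hu
  have h := hasSubexponentialMGF_sq_sub_one_gaussianReal.comp
    ((measurePreserving_eval (fun _ : Fin d => gaussianReal 0 1) i).comp hf)
  simpa only [Function.comp_def, hfi] using h

lemma hasSubexponentialMGF_normSqDev_mul_dotProduct_sq (hu : ‖u‖ = 1) {L : ℝ} (hL : 0 < L) :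
    HasSubexponentialMGF (fun x => normSqDev x * (u.ofLp ⬝ᵥ x) ^ 2) 2
      (512 * √d * Real.exp (-L)) (2 ^ 17 * d) (16 * (8 * (√(d * L) + L)))
      ((gaussVec d 1).restrict {x | |normSqDev x| ≤ 8 * (√(d * L) + L)}) := by
  obtain ⟨i, f, hf, hdev, hfi⟩ := exists_measurePreserving_rotation hu
  have hrestrict := hf.restrict_preimage (s := {x | |normSqDev x| ≤ 8 * (√(d * L) + L)})
    (measurableSet_le (by fun_prop) (by fun_prop))
  simp only [Set.preimage_ofPred_eq, hdev] at hrestrict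
  simpa only [Function.comp_def, hfi, hdev] using
    (hasSubexponentialMGF_normSqDev_mul_coord_sq i hL).comp hrestrict

end Rotation

section SphereNet

variable {E : Type*} [NormedAddCommGroup E]

/-- `S` is a `1/2`-net of the unit sphere of `E`, made of unit vectors. -/
structure IsSphereNet (S : Finset E) : Prop where
  norm_eq_one : ∀ u ∈ S, ‖u‖ = 1
  exists_norm_sub_le : ∀ x : E, ‖x‖ = 1 → ∃ u ∈ S, ‖x - u‖ ≤ 1 / 2

lemma card_le_of_isSeparated_sphere [NormedSpace ℝ E] [FiniteDimensional ℝ E] (s : Finset E)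
    (hs : (s : Set E) ⊆ Metric.sphere 0 1)
    (hsep : Metric.IsSeparated (1 / 2 : NNReal) (s : Set E)) :
    s.card ≤ 5 ^ Module.finrank ℝ E := by
  have hinj : Function.Injective fun c : E => (2 : ℝ) • c := smul_right_injective E two_ne_zero
  rw [← Finset.card_map ⟨_, hinj⟩]
  refine Besicovitch.card_le_of_separated _ (fun c hc => ?_) fun c hc c' hc' hne => ?_
  · obtain ⟨x, hx, rfl⟩ := Finset.mem_map.1 hc
    have hx1 : ‖x‖ = 1 := mem_sphere_zero_iff_norm.1 (hs hx)
    simp [norm_smul, hx1]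
  · obtain ⟨x, hx, rfl⟩ := Finset.mem_map.1 hc
    obtain ⟨y, hy, rfl⟩ := Finset.mem_map.1 hc'
    have hxy : (1 / 2 : NNReal) < nndist x y := by
      simpa only [edist_nndist, ENNReal.coe_lt_coe] using hsep hx hy fun h => hne (by rw [h])
    have hdist : (1 / 2 : ℝ) < ‖x - y‖ := by
      rw [← dist_eq_norm]
      exact_mod_cast hxy
    simp only [Function.Embedding.coeFn_mk, ← smul_sub, norm_smul, Real.norm_ofNat]
    linarith

lemma packingNumber_sphere_le [NormedSpace ℝ E] [FiniteDimensional ℝ E] :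
    Metric.packingNumber (1 / 2) (Metric.sphere (0 : E) 1) ≤ (5 ^ Module.finrank ℝ E : ℕ) := by
  refine iSup₂_le fun C hC => iSup_le fun hsep => ?_
  by_contra! hlt
  obtain ⟨t, htC, ht⟩ := Set.exists_subset_encard_eq (Order.add_one_le_of_lt hlt)
  have hfin : t.Finite := Set.finite_of_encard_eq_coe (k := 5 ^ Module.finrank ℝ E + 1)
    (by rw [ht]; push_cast; rfl)
  lift t to Finset E using hfin
  rw [Set.encard_coe_eq_coe_finsetCard] at ht
  have hcard := card_le_of_isSeparated_sphere t (htC.trans hC) (hsep.subset htC)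
  have : t.card = 5 ^ Module.finrank ℝ E + 1 := by exact_mod_cast ht
  omega

lemma exists_isSphereNet (E : Type*) [NormedAddCommGroup E] [NormedSpace ℝ E]
    [FiniteDimensional ℝ E] :
    ∃ S : Finset E, S.card ≤ 5 ^ Module.finrank ℝ E ∧ IsSphereNet S := by
  have hcov := (Metric.coveringNumber_le_packingNumber (1 / 2) (Metric.sphere (0 : E) 1)).trans
    packingNumber_sphere_le
  obtain ⟨S, hS, hfin, hcover, hcard⟩ := Metric.exists_set_encard_eq_coveringNumber
    (ne_top_of_le_ne_top (ENat.natCast_ne_top _) hcov)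
  lift S to Finset E using hfin
  rw [← hcard, Set.encard_coe_eq_coe_finsetCard, Nat.cast_le] at hcov
  refine ⟨S, hcov, fun u hu => mem_sphere_zero_iff_norm.1 (hS hu), fun x hx => ?_⟩
  obtain ⟨u, hu, hxu⟩ := hcover (mem_sphere_zero_iff_norm.2 hx)
  refine ⟨u, hu, ?_⟩
  have hnn : nndist x u ≤ 1 / 2 := by
    simpa only [Set.mem_ofPred_eq, edist_nndist, ENNReal.coe_le_coe] using hxu
  rw [← dist_eq_norm]
  exact_mod_cast hnn

end SphereNet

section SymmetricOperator

variable {E : Type*} [NormedAddCommGroup E] [InnerProductSpace ℝ E] {T : E →L[ℝ] E} {q : ℝ}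

lemma opNorm_le_of_abs_inner_le (hT : (T : E →ₗ[ℝ] E).IsSymmetric) (hq : 0 ≤ q)
    (h : ∀ x, ‖x‖ = 1 → |inner ℝ (T x) x| ≤ q) : ‖T‖ ≤ q := by
  rw [T.norm_eq_iSup_rayleighQuotient hT]
  refine ciSup_le fun x => ?_
  rcases eq_or_ne x 0 with rfl | hx
  · simpa using hq
  · have hnorm : ‖‖x‖⁻¹ • x‖ = 1 := norm_smul_inv_norm hx
    rw [← T.rayleigh_smul x (inv_ne_zero (norm_ne_zero_iff.2 hx)),
      ContinuousLinearMap.rayleighQuotient, hnorm, one_pow, div_one]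
    exact h _ hnorm

end SymmetricOperator

namespace IsSphereNet

variable {E : Type*} [NormedAddCommGroup E] [InnerProductSpace ℝ E] {S : Finset E} {t : ℝ}

lemma norm_le_two_mul (hS : IsSphereNet S) {p : E} (ht : 0 ≤ t)
    (h : ∀ u ∈ S, |inner ℝ u p| ≤ t) : ‖p‖ ≤ 2 * t := by
  rcases eq_or_ne p 0 with rfl | hp
  · simpa using ht
  set x : E := ‖p‖⁻¹ • p with hx
  obtain ⟨u, hu, hxu⟩ := hS.exists_norm_sub_le x (norm_smul_inv_norm hp)
  have hxp : inner ℝ x p = ‖p‖ := by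
    rw [hx, real_inner_smul_left, real_inner_self_eq_norm_sq]
    field_simp
  have hsub : inner ℝ (x - u) p ≤ 1 / 2 * ‖p‖ :=
    (real_inner_le_norm _ _).trans (by gcongr)
  rw [inner_sub_left, hxp] at hsub
  linarith [(abs_le.1 (h u hu)).2]

-- For unit vectors, `⟪Tx, x⟫ - ⟪Tu, u⟫ = ⟪T(x - u), x + u⟫` with `‖x - u‖ ‖x + u‖ ≤ √(15/16)`.
lemma abs_inner_le (hS : IsSphereNet S) {T : E →L[ℝ] E}
    (hT : (T : E →ₗ[ℝ] E).IsSymmetric) (h : ∀ u ∈ S, |inner ℝ (T u) u| ≤ t) {x : E}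
    (hx : ‖x‖ = 1) : |inner ℝ (T x) x| ≤ t + 31 / 32 * ‖T‖ := by
  obtain ⟨u, hu, hxu⟩ := hS.exists_norm_sub_le x hx
  have hu1 := hS.norm_eq_one u hu
  have hdiff : inner ℝ (T x) x - inner ℝ (T u) u = inner ℝ (T (x - u)) (x + u) := by
    have hsymm : inner ℝ (T u) x = inner ℝ (T x) u := by
      rw [← real_inner_comm]
      exact (hT x u).symm
    rw [map_sub, inner_sub_left, inner_add_right, inner_add_right, hsymm]
    ring
  have hprod : ‖x - u‖ * ‖x + u‖ ≤ 31 / 32 := by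
    have hpar := parallelogram_law_with_norm ℝ x u
    rw [hx, hu1] at hpar
    have hsq : ‖x - u‖ ^ 2 ≤ 1 / 4 := by nlinarith [norm_nonneg (x - u)]
    refine abs_le_of_sq_le_sq' ?_ (by norm_num) |>.2
    rw [mul_pow, show ‖x + u‖ ^ 2 = 4 - ‖x - u‖ ^ 2 by linarith]
    nlinarith
  have hcross : |inner ℝ (T (x - u)) (x + u)| ≤ 31 / 32 * ‖T‖ := by
    calc |inner ℝ (T (x - u)) (x + u)| ≤ ‖T‖ * ‖x - u‖ * ‖x + u‖ :=
          (abs_real_inner_le_norm _ _).trans (by gcongr; exact T.le_opNorm _)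
      _ ≤ 31 / 32 * ‖T‖ := by nlinarith [norm_nonneg T]
  rw [← hdiff] at hcross
  linarith [abs_sub_abs_le_abs_sub (inner ℝ (T x) x) (inner ℝ (T u) u), h u hu]

lemma opNorm_le (hS : IsSphereNet S) {T : E →L[ℝ] E} (hT : (T : E →ₗ[ℝ] E).IsSymmetric)
    (ht : 0 ≤ t) (h : ∀ u ∈ S, |inner ℝ (T u) u| ≤ t) : ‖T‖ ≤ 32 * t := by
  linarith [opNorm_le_of_abs_inner_le hT (by positivity) fun x hx => hS.abs_inner_le hT h hx]

end IsSphereNet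

section EuclideanNorms

variable {d : ℕ}

lemma eucNorm_eq_norm_toLp (x : Fin d → ℝ) : eucNorm x = ‖WithLp.toLp 2 x‖ := by
  rw [eucNorm, EuclideanSpace.norm_eq]
  simp only [Real.norm_eq_abs, sq_abs]

lemma eucNorm_nonneg (x : Fin d → ℝ) : 0 ≤ eucNorm x := Real.sqrt_nonneg _

lemma eucNorm_sq (x : Fin d → ℝ) : eucNorm x ^ 2 = ∑ i, x i ^ 2 :=
  Real.sq_sqrt (Finset.sum_nonneg fun _ _ => sq_nonneg _)

lemma eucNorm_sq_eq_dotProduct (x : Fin d → ℝ) : eucNorm x ^ 2 = x ⬝ᵥ x := by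
  rw [eucNorm_sq]
  simp only [dotProduct, sq]

lemma eucNorm_add_le (x y : Fin d → ℝ) : eucNorm (x + y) ≤ eucNorm x + eucNorm y := by
  simpa only [eucNorm_eq_norm_toLp, WithLp.toLp_add] using norm_add_le _ _

lemma eucNorm_smul (c : ℝ) (x : Fin d → ℝ) : eucNorm (c • x) = |c| * eucNorm x := by
  rw [eucNorm_eq_norm_toLp, eucNorm_eq_norm_toLp, WithLp.toLp_smul, norm_smul, Real.norm_eq_abs]

lemma inner_toLp_eq_dotProduct (x y : Fin d → ℝ) :
    inner ℝ (WithLp.toLp 2 x) (WithLp.toLp 2 y) = x ⬝ᵥ y := by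
  rw [EuclideanSpace.inner_toLp_toLp, star_trivial, dotProduct_comm]

lemma abs_dotProduct_le (x y : Fin d → ℝ) : |x ⬝ᵥ y| ≤ eucNorm x * eucNorm y := by
  simpa only [inner_toLp_eq_dotProduct, ← eucNorm_eq_norm_toLp] using
    abs_real_inner_le_norm (WithLp.toLp 2 x) (WithLp.toLp 2 y)

end EuclideanNorms

section SpectralNorm

variable {d : ℕ} {A B : Matrix (Fin d) (Fin d) ℝ}

lemma specNorm_nonneg (A : Matrix (Fin d) (Fin d) ℝ) : 0 ≤ specNorm A := norm_nonneg _

lemma specNorm_add_le (A B : Matrix (Fin d) (Fin d) ℝ) :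
    specNorm (A + B) ≤ specNorm A + specNorm B := by
  simpa only [specNorm, map_add] using norm_add_le _ _

lemma specNorm_smul (c : ℝ) (A : Matrix (Fin d) (Fin d) ℝ) :
    specNorm (c • A) = |c| * specNorm A := by
  rw [specNorm, specNorm, map_smul, map_smul, norm_smul, Real.norm_eq_abs]

lemma eucNorm_mulVec_le (A : Matrix (Fin d) (Fin d) ℝ) (x : Fin d → ℝ) :
    eucNorm (A *ᵥ x) ≤ specNorm A * eucNorm x := by
  rw [eucNorm_eq_norm_toLp, eucNorm_eq_norm_toLp]
  exact (LinearMap.toContinuousLinearMap (Matrix.toEuclideanLin A)).le_opNorm (WithLp.toLp 2 x)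

lemma abs_dotProduct_mulVec_le (A : Matrix (Fin d) (Fin d) ℝ) (x : Fin d → ℝ) :
    |x ⬝ᵥ A *ᵥ x| ≤ specNorm A * eucNorm x ^ 2 :=
  calc |x ⬝ᵥ A *ᵥ x| ≤ eucNorm x * eucNorm (A *ᵥ x) := abs_dotProduct_le _ _
    _ ≤ eucNorm x * (specNorm A * eucNorm x) := by
      gcongr
      exacts [eucNorm_nonneg x, eucNorm_mulVec_le A x]
    _ = specNorm A * eucNorm x ^ 2 := by ring

lemma isSymmetric_toEuclideanLin (hA : A.IsSymm) : (toEuclideanLin A).IsSymmetric := by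
  rwa [isSymmetric_toEuclideanLin_iff, IsHermitian, conjTranspose_eq_transpose_of_trivial]

lemma inner_toEuclideanLin_self (A : Matrix (Fin d) (Fin d) ℝ) (x : EuclideanSpace ℝ (Fin d)) :
    inner ℝ (toEuclideanLin A x) x = x.ofLp ⬝ᵥ A *ᵥ x.ofLp :=
  (inner_toLp_eq_dotProduct (A *ᵥ x.ofLp) x.ofLp).trans (dotProduct_comm _ _)

lemma specNorm_le_of_abs_dotProduct_mulVec_le (hA : A.IsSymm) {q : ℝ} (hq : 0 ≤ q)
    (h : ∀ x, eucNorm x = 1 → |x ⬝ᵥ A *ᵥ x| ≤ q) : specNorm A ≤ q := by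
  refine opNorm_le_of_abs_inner_le (isSymmetric_toEuclideanLin hA) hq fun x hx => ?_
  rw [LinearMap.coe_toContinuousLinearMap', inner_toEuclideanLin_self]
  exact h x.ofLp (by rwa [eucNorm_eq_norm_toLp])

lemma specNorm_one_le : specNorm (1 : Matrix (Fin d) (Fin d) ℝ) ≤ 1 := by
  refine specNorm_le_of_abs_dotProduct_mulVec_le isSymm_one zero_le_one fun x hx => ?_
  rw [one_mulVec, ← eucNorm_sq_eq_dotProduct, hx, one_pow, abs_one]

variable {S : Finset (EuclideanSpace ℝ (Fin d))} {t : ℝ}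

lemma IsSphereNet.eucNorm_le (hS : IsSphereNet S) {p : Fin d → ℝ} (ht : 0 ≤ t)
    (h : ∀ u ∈ S, |u.ofLp ⬝ᵥ p| ≤ t) : eucNorm p ≤ 2 * t := by
  rw [eucNorm_eq_norm_toLp]
  exact hS.norm_le_two_mul ht fun u hu =>
    (inner_toLp_eq_dotProduct u.ofLp p).symm ▸ h u hu

lemma IsSphereNet.specNorm_le (hS : IsSphereNet S) (hA : A.IsSymm) (ht : 0 ≤ t)
    (h : ∀ u ∈ S, |u.ofLp ⬝ᵥ A *ᵥ u.ofLp| ≤ t) : specNorm A ≤ 32 * t := by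
  refine hS.opNorm_le (isSymmetric_toEuclideanLin hA) ht fun u hu => ?_
  rw [LinearMap.coe_toContinuousLinearMap', inner_toEuclideanLin_self]
  exact h u hu

lemma specNorm_le_of_vecCons_quadForm {A : Matrix (Fin (d + 1)) (Fin (d + 1)) ℝ} (hA : A.IsSymm)
    {a : ℝ} {p : Fin d → ℝ}
    (h : ∀ (s : ℝ) (x : Fin d → ℝ), vecCons s x ⬝ᵥ A *ᵥ vecCons s x =
      a * s ^ 2 + 2 * s * (p ⬝ᵥ x) + x ⬝ᵥ B *ᵥ x) :
    specNorm A ≤ |a| + eucNorm p + specNorm B := by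
  have hp := eucNorm_nonneg p
  have hB := specNorm_nonneg B
  refine specNorm_le_of_abs_dotProduct_mulVec_le hA (by positivity) fun z hz => ?_
  obtain ⟨s, x, rfl⟩ : ∃ s x, z = vecCons s x := ⟨_, _, (cons_head_tail z).symm⟩
  have hsplit : s ^ 2 + eucNorm x ^ 2 = 1 := by
    have := eucNorm_sq_eq_dotProduct (vecCons s x)
    rw [cons_dotProduct_cons, ← eucNorm_sq_eq_dotProduct, hz] at this
    linarith
  have hquad := abs_dotProduct_mulVec_le B x
  have hcross : |2 * s * (p ⬝ᵥ x)| ≤ eucNorm p := by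
    rw [abs_mul, abs_mul, abs_two]
    have hle := abs_dotProduct_le p x
    have hamgm : 2 * (|s| * eucNorm x) ≤ 1 := by
      nlinarith [sq_nonneg (|s| - eucNorm x), sq_abs s]
    nlinarith [mul_le_mul_of_nonneg_left hle (abs_nonneg s)]
  have hdiag : |a * s ^ 2| = |a| * s ^ 2 := by rw [abs_mul, abs_sq]
  rw [h]
  refine (abs_add_three _ _ _).trans ?_
  nlinarith [abs_nonneg a, sq_nonneg s, sq_nonneg (eucNorm x)]

end SpectralNorm

/-- The weighted Gram matrix `∑ i, w i • g i (g i)ᵀ` of a family of vectors. -/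
def weightedGram {N d : ℕ} (w : Fin N → ℝ) (g : Fin N → Fin d → ℝ) : Matrix (Fin d) (Fin d) ℝ :=
  ∑ i, w i • vecMulVec (g i) (g i)

section Decomposition

variable {N d : ℕ}

lemma isSymm_vecMulVec_self (y : Fin d → ℝ) : (vecMulVec y y).IsSymm := transpose_vecMulVec _ _

lemma isSymm_weightedGram (w : Fin N → ℝ) (g : Fin N → Fin d → ℝ) :
    (weightedGram w g).IsSymm := by
  simp only [weightedGram, IsSymm, transpose_sum, transpose_smul, transpose_vecMulVec]

lemma dotProduct_vecMulVec_self_mulVec (x y : Fin d → ℝ) :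
    x ⬝ᵥ vecMulVec y y *ᵥ x = (y ⬝ᵥ x) ^ 2 := by
  rw [vecMulVec_mulVec, op_smul_eq_smul, dotProduct_smul, smul_eq_mul, sq, dotProduct_comm x]

lemma dotProduct_weightedGram_mulVec (w : Fin N → ℝ) (g : Fin N → Fin d → ℝ) (x : Fin d → ℝ) :
    x ⬝ᵥ weightedGram w g *ᵥ x = ∑ i, w i * (g i ⬝ᵥ x) ^ 2 := by
  simp only [weightedGram, sum_mulVec, smul_mulVec, dotProduct_sum, dotProduct_smul, smul_eq_mul,
    dotProduct_vecMulVec_self_mulVec]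

lemma rowCat_eq_vecCons (a : ℝ) (b : Fin d → ℝ) : rowCat (n := d + 1) a b = vecCons a b := by
  funext j
  refine Fin.cases ?_ (fun j => ?_) j <;> simp [rowCat]

lemma e1vec_eq_vecCons : e1vec (d + 1) = vecCons 1 0 := by
  funext j
  refine Fin.cases ?_ (fun j => ?_) j <;> simp [e1vec]

lemma sum_rowCat_sq_sub {N : ℝ} (hN : 0 < N) (a : ℝ) (g : Fin d → ℝ) :
    ∑ j, rowCat (n := d + 1) a ((√N)⁻¹ • g) j ^ 2 - (((d + 1 : ℕ) : ℝ) - 1) / N =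
      a ^ 2 + normSqDev g / N := by
  rw [rowCat_eq_vecCons, Fin.sum_univ_succ]
  simp only [cons_val_zero, cons_val_succ, Pi.smul_apply, smul_eq_mul, mul_pow, inv_pow,
    Real.sq_sqrt hN.le, ← Finset.mul_sum, normSqDev, Finset.sum_sub_distrib, Finset.sum_const,
    Finset.card_univ, Fintype.card_fin, nsmul_eq_mul]
  push_cast
  ring

lemma lpNorm_natCast_pow {p : ℕ} (hp : Even p) (hp₀ : p ≠ 0) (v : Fin N → ℝ) :
    lpNorm p v ^ p = ∑ i, v i ^ p := by
  have hsum : 0 ≤ ∑ i, |v i| ^ (p : ℝ) := by positivity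
  rw [_root_.lpNorm, ← Real.rpow_natCast, ← Real.rpow_mul hsum,
    one_div_mul_cancel (Nat.cast_ne_zero.2 hp₀), Real.rpow_one]
  simp only [Real.rpow_natCast, hp.pow_abs]

lemma lpNorm_four_pow_four (v : Fin N → ℝ) : lpNorm 4 v ^ 4 = ∑ i, v i ^ 4 := by
  simpa using lpNorm_natCast_pow (p := 4) (by decide) (by norm_num) v

lemma lpNorm_six_pow_six (v : Fin N → ℝ) : lpNorm 6 v ^ 6 = ∑ i, v i ^ 6 := by
  simpa using lpNorm_natCast_pow (p := 6) (by decide) (by norm_num) v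

lemma dotProduct_specMat_mulVec (hN : 0 < N) (v : Fin N → ℝ) (g : Fin N → Fin d → ℝ) (s : ℝ)
    (x : Fin d → ℝ) :
    vecCons s x ⬝ᵥ specMat (gaussBasis (n := d + 1) v fun i => (√N)⁻¹ • g i) *ᵥ vecCons s x =
      ∑ i, (v i ^ 2 + normSqDev (g i) / N) * (v i * s + (g i ⬝ᵥ x) / √N) ^ 2 -
        3 / N * (s ^ 2 + x ⬝ᵥ x) := by
  have hN' : (0 : ℝ) < N := by exact_mod_cast hN
  have hrow (i : Fin N) : rowCat (n := d + 1) (v i) ((√N)⁻¹ • g i) ⬝ᵥ vecCons s x =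
      v i * s + (g i ⬝ᵥ x) / √N := by
    rw [rowCat_eq_vecCons, cons_dotProduct_cons, smul_dotProduct, smul_eq_mul, inv_mul_eq_div]
  have hgram : specMat (gaussBasis (n := d + 1) v fun i => (√N)⁻¹ • g i) =
      weightedGram (fun i => v i ^ 2 + normSqDev (g i) / N)
        (fun i => rowCat (v i) ((√N)⁻¹ • g i)) - (3 / N : ℝ) • 1 := by
    simp only [← sum_rowCat_sq_sub hN']
    rfl
  rw [hgram, sub_mulVec, dotProduct_sub, dotProduct_weightedGram_mulVec, smul_mulVec, one_mulVec,
    dotProduct_smul, cons_dotProduct_cons, smul_eq_mul, sq s]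
  simp only [hrow]

lemma sum_smul_dotProduct (w : Fin N → ℝ) (g : Fin N → Fin d → ℝ) (x : Fin d → ℝ) :
    (∑ i, w i • g i) ⬝ᵥ x = ∑ i, w i * (g i ⬝ᵥ x) := by
  simp only [sum_dotProduct, smul_dotProduct, smul_eq_mul]

lemma quadForm_specMat_sub (hN : 0 < N) (v : Fin N → ℝ) (g : Fin N → Fin d → ℝ) (s : ℝ)
    (x : Fin d → ℝ) :
    vecCons s x ⬝ᵥ (specMat (gaussBasis (n := d + 1) v fun i => (√N)⁻¹ • g i) -
        (lpNorm 4 v ^ 4 - 3 / N) • vecMulVec (e1vec (d + 1)) (e1vec (d + 1))) *ᵥ vecCons s x =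
      (∑ i, v i ^ 2 * normSqDev (g i)) / N * s ^ 2 +
      2 * s * (((√N)⁻¹ • ∑ i, v i ^ 3 • g i +
        (√N ^ 3)⁻¹ • ∑ i, (v i * normSqDev (g i)) • g i) ⬝ᵥ x) +
      x ⬝ᵥ ((N : ℝ)⁻¹ • (weightedGram (fun i => v i ^ 2) g - (∑ i, v i ^ 2) • 1) +
        ((N : ℝ) ^ 2)⁻¹ • (weightedGram (fun i => normSqDev (g i)) g - (2 * N : ℝ) • 1) +
        ((eucNorm v ^ 2 - 1) / N) • 1) *ᵥ x := by
  have hN' : (0 : ℝ) < N := by exact_mod_cast hN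
  have hsqrt : √(N : ℝ) ^ 2 = N := Real.sq_sqrt hN'.le
  have hpos : 0 < √(N : ℝ) := Real.sqrt_pos.2 hN'
  have hterm (i : Fin N) :
      (v i ^ 2 + normSqDev (g i) / N) * (v i * s + (g i ⬝ᵥ x) / √N) ^ 2 =
        v i ^ 4 * s ^ 2 + v i ^ 2 * normSqDev (g i) * (s ^ 2 / N) +
        v i ^ 3 * (g i ⬝ᵥ x) * (2 * s / √N) +
        v i * normSqDev (g i) * (g i ⬝ᵥ x) * (2 * s / √N ^ 3) +
        v i ^ 2 * (g i ⬝ᵥ x) ^ 2 / N + normSqDev (g i) * (g i ⬝ᵥ x) ^ 2 / N ^ 2 := by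
    generalize √(N : ℝ) = r at hsqrt hpos
    rw [← hsqrt]
    field_simp
    ring
  simp only [sub_mulVec, add_mulVec, smul_mulVec, one_mulVec, dotProduct_sub, dotProduct_add,
    dotProduct_smul, smul_eq_mul, dotProduct_specMat_mulVec hN, dotProduct_vecMulVec_self_mulVec,
    e1vec_eq_vecCons, cons_dotProduct_cons, zero_dotProduct, dotProduct_weightedGram_mulVec,
    add_dotProduct, smul_dotProduct, sum_smul_dotProduct, lpNorm_four_pow_four, eucNorm_sq, hterm,
    Finset.sum_add_distrib, ← Finset.sum_mul, ← Finset.sum_div]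
  field_simp
  ring

lemma specNorm_specMat_sub_le (hN : 0 < N) (v : Fin N → ℝ) (g : Fin N → Fin d → ℝ) :
    specNorm (specMat (gaussBasis (n := d + 1) v fun i => (√N)⁻¹ • g i) -
        (lpNorm 4 v ^ 4 - 3 / N) • vecMulVec (e1vec (d + 1)) (e1vec (d + 1))) ≤
      |∑ i, v i ^ 2 * normSqDev (g i)| / N + eucNorm (∑ i, v i ^ 3 • g i) / √N +
      eucNorm (∑ i, (v i * normSqDev (g i)) • g i) / √N ^ 3 +
      specNorm (weightedGram (fun i => v i ^ 2) g - (∑ i, v i ^ 2) • 1) / N +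
      specNorm (weightedGram (fun i => normSqDev (g i)) g - (2 * N : ℝ) • 1) / N ^ 2 +
      |eucNorm v ^ 2 - 1| / N := by
  have hsymm : (specMat (gaussBasis (n := d + 1) v fun i => (√N)⁻¹ • g i) -
      (lpNorm 4 v ^ 4 - 3 / N) • vecMulVec (e1vec (d + 1)) (e1vec (d + 1))).IsSymm :=
    ((isSymm_weightedGram _ _).sub (isSymm_one.smul _)).sub ((isSymm_vecMulVec_self _).smul _)
  refine (specNorm_le_of_vecCons_quadForm hsymm (quadForm_specMat_sub hN v g)).trans ?_
  grw [eucNorm_add_le, specNorm_add_le, specNorm_add_le]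
  simp only [eucNorm_smul, specNorm_smul, abs_div, abs_inv, abs_pow, Nat.abs_cast,
    abs_of_nonneg (Real.sqrt_nonneg _)]
  grw [specNorm_one_le]
  exact (by ring : _ = _).le

end Decomposition

lemma HasSubexponentialMGF.measure_abs_weighted_sum_sub_gt_le {Ω ι : Type*} [Fintype ι]
    [MeasurableSpace Ω] {μ : Measure Ω} [IsFiniteMeasure μ] {X : Ω → ℝ} {m e V R : ℝ}
    (h : HasSubexponentialMGF X m e V R μ) (hV : 0 ≤ V) (hR : 0 ≤ R) {w : ι → ℝ} {W : ℝ}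
    (hW₀ : 0 ≤ W) (hW : ∀ i, |w i| ≤ W) {K : ℝ} (hK : 0 < K) :
    Measure.pi (fun _ => μ) {x | e * ∑ i, |w i| + 2 * √(K * (V * ∑ i, w i ^ 2)) + K * (W * R) <
      |∑ i, w i * X (x i) - m * ∑ i, w i|} ≤ 2 * ENNReal.ofReal (Real.exp (-K)) :=
  (h.weighted_sum_pi hR hW).measure_abs_sub_gt_le (by positivity) (by positivity) hK

lemma measure_exists_mem_le_of_card_le {Ω α : Type*} [MeasurableSpace Ω] {μ : Measure Ω}
    {S : Finset α} {p : α → Ω → Prop} {d : ℕ} {L : ℝ} (hS : S.card ≤ 5 ^ d)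
    (h : ∀ u ∈ S, μ {ω | p u ω} ≤ 2 * ENNReal.ofReal (Real.exp (-(2 * (d + L))))) :
    μ {ω | ∃ u ∈ S, p u ω} ≤ 2 * ENNReal.ofReal (Real.exp (-(2 * L))) := by
  have hexp : (5 : ℝ) ^ d * Real.exp (-(2 * (d + L))) ≤ Real.exp (-(2 * L)) := by
    have h5 : (5 : ℝ) ≤ Real.exp 2 := by
      rw [show (2 : ℝ) = (2 : ℕ) * 1 by norm_num, Real.exp_nat_mul]
      nlinarith [Real.exp_one_gt_d9]
    calc (5 : ℝ) ^ d * Real.exp (-(2 * (d + L)))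
        ≤ Real.exp 2 ^ d * Real.exp (-(2 * (d + L))) := by gcongr
      _ = Real.exp (-(2 * L)) := by
        rw [← Real.exp_nat_mul, ← Real.exp_add]
        ring_nf
  calc μ {ω | ∃ u ∈ S, p u ω} = μ (⋃ u ∈ S, {ω | p u ω}) := by
        congr 1
        ext ω
        simp
    _ ≤ ∑ u ∈ S, μ {ω | p u ω} := measure_biUnion_finset_le _ _
    _ ≤ S.card * (2 * ENNReal.ofReal (Real.exp (-(2 * (d + L))))) := by
        rw [← nsmul_eq_mul]
        exact Finset.sum_le_card_nsmul _ _ _ h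
    _ ≤ (5 ^ d : ℕ) * (2 * ENNReal.ofReal (Real.exp (-(2 * (d + L))))) := by gcongr
    _ = 2 * ENNReal.ofReal (5 ^ d * Real.exp (-(2 * (d + L)))) := by
        rw [ENNReal.ofReal_mul (by positivity), ENNReal.ofReal_pow (by norm_num),
          ENNReal.ofReal_ofNat]
        push_cast
        ring
    _ ≤ 2 * ENNReal.ofReal (Real.exp (-(2 * L))) := by gcongr

section Statistics

variable {N d : ℕ} {w : Fin N → ℝ} {W L : ℝ}

lemma dotProduct_weightedGram_sub_smul_one_mulVec {u : EuclideanSpace ℝ (Fin d)} (hu : ‖u‖ = 1)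
    (w : Fin N → ℝ) (g : Fin N → Fin d → ℝ) (c : ℝ) :
    u.ofLp ⬝ᵥ (weightedGram w g - c • 1) *ᵥ u.ofLp = ∑ i, w i * (u.ofLp ⬝ᵥ g i) ^ 2 - c := by
  have hself : u.ofLp ⬝ᵥ u.ofLp = 1 := by
    rw [← eucNorm_sq_eq_dotProduct, eucNorm_eq_norm_toLp, WithLp.toLp_ofLp, hu, one_pow]
  rw [sub_mulVec, dotProduct_sub, dotProduct_weightedGram_mulVec, smul_mulVec, one_mulVec,
    dotProduct_smul, hself, smul_eq_mul, mul_one]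
  simp only [dotProduct_comm _ u.ofLp]

lemma eucNorm_le_sqrt_mul_of_abs_le {q : Fin d → ℝ} {t : ℝ} (ht : 0 ≤ t) (h : ∀ j, |q j| ≤ t) :
    eucNorm q ≤ √d * t := by
  have hsum : ∑ j, q j ^ 2 ≤ d * t ^ 2 := by
    simpa using Finset.sum_le_card_nsmul Finset.univ _ _ fun j _ => sq_le_sq' (abs_le.1 (h j)).1
      (abs_le.1 (h j)).2
  rw [eucNorm, ← Real.sqrt_sq ht, ← Real.sqrt_mul (Nat.cast_nonneg d)]
  exact Real.sqrt_le_sqrt hsum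

lemma measure_abs_sum_mul_normSqDev_gt_le (hW₀ : 0 ≤ W) (hW : ∀ i, |w i| ≤ W) (hL : 0 < L) :
    iidGaussVec N d 1 {g | 2 * √(8 * d * L * ∑ i, w i ^ 2) + 8 * L * W <
      |∑ i, w i * normSqDev (g i)|} ≤ 2 * ENNReal.ofReal (Real.exp (-(2 * L))) := by
  refine (measure_mono fun g hg => ?_).trans
    ((hasSubexponentialMGF_normSqDev d).measure_abs_weighted_sum_sub_gt_le (by positivity)
      (by norm_num) hW₀ hW (K := 2 * L) (by positivity))
  simp only [Set.mem_ofPred_eq, zero_mul, sub_zero, zero_add] at hg ⊢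
  convert hg using 2 <;> ring_nf

lemma measure_eucNorm_weighted_sum_gt_le (w : Fin N → ℝ) (hL : 0 < L) :
    iidGaussVec N d 1 {g | 4 * √((d + L) * ∑ i, w i ^ 2) < eucNorm (∑ i, w i • g i)} ≤
      2 * ENNReal.ofReal (Real.exp (-(2 * L))) := by
  obtain ⟨S, hcard, hS⟩ := exists_isSphereNet (EuclideanSpace ℝ (Fin d))
  rw [finrank_euclideanSpace_fin] at hcard
  refine (measure_mono fun g hg => ?_).trans (measure_exists_mem_le_of_card_le hcard fun u hu =>
    (hasSubexponentialMGF_dotProduct (hS.norm_eq_one u hu)).measure_abs_weighted_sum_sub_gt_le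
      (by norm_num) le_rfl (Finset.sum_nonneg fun i _ => abs_nonneg (w i))
      (fun i => Finset.single_le_sum (fun i _ => abs_nonneg (w i)) (Finset.mem_univ i))
      (K := 2 * (d + L)) (by positivity))
  simp only [Set.mem_ofPred_eq, zero_mul, mul_zero, sub_zero, zero_add, add_zero] at hg ⊢
  contrapose! hg
  refine (hS.eucNorm_le (t := 2 * √((d + L) * ∑ i, w i ^ 2)) (by positivity)
    fun u hu => ?_).trans_eq (by ring)
  have hrow := hg u hu
  rw [show 2 * (d + L) * (1 / 2 * ∑ i, w i ^ 2) = (d + L) * ∑ i, w i ^ 2 by ring] at hrow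
  simpa only [dotProduct_sum, dotProduct_smul, smul_eq_mul] using hrow

lemma measure_specNorm_weightedGram_sub_gt_le (hW₀ : 0 ≤ W) (hW : ∀ i, |w i| ≤ W) (hL : 0 < L) :
    iidGaussVec N d 1 {g | 32 * (2 * √(8 * (d + L) * ∑ i, w i ^ 2) + 8 * (d + L) * W) <
      specNorm (weightedGram w g - (∑ i, w i) • 1)} ≤
      2 * ENNReal.ofReal (Real.exp (-(2 * L))) := by
  obtain ⟨S, hcard, hS⟩ := exists_isSphereNet (EuclideanSpace ℝ (Fin d))
  rw [finrank_euclideanSpace_fin] at hcard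
  refine (measure_mono fun g hg => ?_).trans (measure_exists_mem_le_of_card_le hcard fun u hu =>
    (hasSubexponentialMGF_dotProduct_sq_sub_one
      (hS.norm_eq_one u hu)).measure_abs_weighted_sum_sub_gt_le
      (by norm_num) (by norm_num) hW₀ hW (K := 2 * (d + L)) (by positivity))
  simp only [Set.mem_ofPred_eq, zero_mul, sub_zero, zero_add] at hg ⊢
  contrapose! hg
  refine hS.specNorm_le ((isSymm_weightedGram w g).sub (isSymm_one.smul _)) (by positivity)
    fun u hu => ?_
  have hrow := hg u hu
  simp only [mul_sub, Finset.sum_sub_distrib, mul_one] at hrow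
  rw [dotProduct_weightedGram_sub_smul_one_mulVec (hS.norm_eq_one u hu)]
  exact hrow.trans_eq (by ring_nf)

lemma measure_exists_abs_normSqDev_gt_le (N d : ℕ) (hL : 0 < L) :
    iidGaussVec N d 1 {g | ∃ i, 8 * (√(d * L) + L) < |normSqDev (g i)|} ≤
      N * (2 * ENNReal.ofReal (Real.exp (-(2 * L)))) := by
  have hmarginal (i : Fin N) : iidGaussVec N d 1 {g | 8 * (√(d * L) + L) < |normSqDev (g i)|} ≤
      2 * ENNReal.ofReal (Real.exp (-(2 * L))) :=
    ((measurePreserving_eval (fun _ => gaussVec d 1) i).measure_preimage_le _).trans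
      (measure_abs_normSqDev_gt_le d hL)
  rw [Set.ofPred_exists]
  exact (measure_iUnion_fintype_le _ _).trans
    ((Finset.sum_le_card_nsmul Finset.univ _ _ fun i _ => hmarginal i).trans_eq
      (by rw [Finset.card_univ, Fintype.card_fin, nsmul_eq_mul]))

lemma iidGaussVec_le_pi_restrict_add (hL : 0 < L) (A : Set (Fin N → Fin d → ℝ)) :
    iidGaussVec N d 1 A ≤
      Measure.pi (fun _ => (gaussVec d 1).restrict {x | |normSqDev x| ≤ 8 * (√(d * L) + L)}) A +
        N * (2 * ENNReal.ofReal (Real.exp (-(2 * L)))) := by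
  set G : Set (Fin N → Fin d → ℝ) :=
    Set.univ.pi fun _ => {x | |normSqDev x| ≤ 8 * (√(d * L) + L)} with hG
  have hcompl : A \ G ⊆ {g | ∃ i, 8 * (√(d * L) + L) < |normSqDev (g i)|} := fun g hg => by
    simpa [hG] using hg.2
  rw [← Measure.restrict_pi_pi]
  calc iidGaussVec N d 1 A ≤ iidGaussVec N d 1 (A ∩ G) + iidGaussVec N d 1 (A \ G) :=
        measure_le_inter_add_sdiff _ _ _
    _ ≤ (iidGaussVec N d 1).restrict G A + N * (2 * ENNReal.ofReal (Real.exp (-(2 * L)))) :=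
        add_le_add (Measure.le_restrict_apply _ _)
          ((measure_mono hcompl).trans (measure_exists_abs_normSqDev_gt_le N d hL))

lemma measure_eucNorm_sum_normSqDev_smul_gt_le (hW₀ : 0 ≤ W) (hW : ∀ i, |w i| ≤ W)
    (hL : 0 < L) :
    iidGaussVec N d 1
      {g | √d * (512 * √d * (Real.exp (-L) * ∑ i, |w i|) +
          2 * √(2 * L * (2 ^ 17 * d * ∑ i, w i ^ 2)) +
          2 * L * (W * (16 * (8 * (√(d * L) + L))))) <
        eucNorm (∑ i, (w i * normSqDev (g i)) • g i)} ≤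
      (d + N) * (2 * ENNReal.ofReal (Real.exp (-(2 * L)))) := by
  rw [add_mul]
  refine (iidGaussVec_le_pi_restrict_add hL _).trans (add_le_add_left ?_ _)
  have htail (j : Fin d) :=
    (hasSubexponentialMGF_normSqDev_mul_coord j hL).measure_abs_weighted_sum_sub_gt_le
      (by positivity) (by positivity) hW₀ hW (K := 2 * L) (by positivity)
  refine (measure_mono fun g hg => ?_).trans ((measure_iUnion_fintype_le _ _).trans
    ((Finset.sum_le_card_nsmul Finset.univ _ _ fun j _ => htail j).trans_eq
      (by rw [Finset.card_univ, Fintype.card_fin, nsmul_eq_mul])))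
  simp only [Set.mem_iUnion, Set.mem_ofPred_eq, zero_mul, sub_zero] at hg ⊢
  contrapose! hg
  refine eucNorm_le_sqrt_mul_of_abs_le (by positivity) fun j => ?_
  simpa only [Finset.sum_apply, Pi.smul_apply, smul_eq_mul, mul_assoc] using hg j

lemma measure_specNorm_weightedGram_normSqDev_sub_gt_le (hL : 0 < L) :
    iidGaussVec N d 1
      {g | 32 * (512 * √d * (Real.exp (-L) * N) + 2 * √(2 * (d + L) * (2 ^ 17 * d * N)) +
          2 * (d + L) * (16 * (8 * (√(d * L) + L)))) <
        specNorm (weightedGram (fun i => normSqDev (g i)) g - (2 * N : ℝ) • 1)} ≤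
      (1 + N) * (2 * ENNReal.ofReal (Real.exp (-(2 * L)))) := by
  rw [add_mul, one_mul]
  refine (iidGaussVec_le_pi_restrict_add hL _).trans (add_le_add_left ?_ _)
  obtain ⟨S, hcard, hS⟩ := exists_isSphereNet (EuclideanSpace ℝ (Fin d))
  rw [finrank_euclideanSpace_fin] at hcard
  refine (measure_mono fun g hg => ?_).trans (measure_exists_mem_le_of_card_le hcard fun u hu =>
    (hasSubexponentialMGF_normSqDev_mul_dotProduct_sq
      (hS.norm_eq_one u hu) hL).measure_abs_weighted_sum_sub_gt_le (w := fun _ : Fin N => 1)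
      (by positivity) (by positivity) zero_le_one (fun _ => abs_one.le) (K := 2 * (d + L))
      (by positivity))
  simp only [Set.mem_ofPred_eq, one_mul, abs_one, one_pow, Finset.sum_const, Finset.card_univ,
    Fintype.card_fin, nsmul_eq_mul, mul_one] at hg ⊢
  contrapose! hg
  refine hS.specNorm_le ((isSymm_weightedGram _ g).sub (isSymm_one.smul _)) (by positivity)
    fun u hu => ?_
  rw [dotProduct_weightedGram_sub_smul_one_mulVec (hS.norm_eq_one u hu)]
  exact (hg u hu).trans_eq (by ring)

end Statistics

section Thresholds

variable {D ν ℓ s t t' a b m w q : ℝ}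

lemma sqrt_mul_sq_le {x y z : ℝ} (hy : 0 ≤ y) (hz : 0 ≤ z) (h : x ≤ y ^ 2) :
    √(x * z ^ 2) ≤ y * z := by
  refine Real.sqrt_le_iff.2 ⟨by positivity, ?_⟩
  rw [mul_pow]
  gcongr

lemma add_sq_le_two_mul_mul_sq (hν : 1 ≤ ν) (hℓ : 1 ≤ ℓ) (hD : D ≤ ν ^ 2) :
    D + ℓ ^ 2 ≤ 2 * (ν * ℓ) ^ 2 := by
  nlinarith [one_le_pow₀ hν (n := 2), one_le_pow₀ hℓ (n := 2), mul_pow ν ℓ 2]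

lemma linear_threshold_le (hν : 0 ≤ ν) (hℓ : 1 ≤ ℓ) (hD : D ≤ ν ^ 2) (ha : 0 ≤ a) :
    (2 * √(8 * D * ℓ ^ 2 * a ^ 2) + 8 * ℓ ^ 2 * w ^ 2) * s ^ 2 ≤
      6 * (a * (ν * ℓ) * s ^ 2) + 8 * (w ^ 2 * (ν ^ 2 * ℓ ^ 2 + ℓ ^ 4) * s ^ 2) := by
  have hsqrt : √(8 * D * ℓ ^ 2 * a ^ 2) ≤ 3 * (ν * ℓ) * a :=
    sqrt_mul_sq_le (by positivity) ha (by nlinarith [sq_nonneg ℓ, sq_nonneg (ν * ℓ)])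
  have hpow : ℓ ^ 2 ≤ ν ^ 2 * ℓ ^ 2 + ℓ ^ 4 :=
    (pow_le_pow_right₀ hℓ (by norm_num)).trans (le_add_of_nonneg_left (by positivity))
  calc (2 * √(8 * D * ℓ ^ 2 * a ^ 2) + 8 * ℓ ^ 2 * w ^ 2) * s ^ 2
      ≤ (2 * (3 * (ν * ℓ) * a) + 8 * (ν ^ 2 * ℓ ^ 2 + ℓ ^ 4) * w ^ 2) * s ^ 2 := by gcongr
    _ = _ := by ring

lemma cubic_threshold_le (hν : 0 ≤ ν) (hℓ : 0 ≤ ℓ) (hD : D ≤ ν ^ 2) (hb : 0 ≤ b) (hs : 0 ≤ s) :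
    4 * √((D + ℓ ^ 2) * b ^ 2) * s ≤ 4 * (b * (ν + ℓ) * s) := by
  have hsqrt : √((D + ℓ ^ 2) * b ^ 2) ≤ (ν + ℓ) * b :=
    sqrt_mul_sq_le (by positivity) hb (by nlinarith [mul_nonneg hν hℓ])
  calc 4 * √((D + ℓ ^ 2) * b ^ 2) * s ≤ 4 * ((ν + ℓ) * b) * s := by gcongr
    _ = _ := by ring

lemma quadratic_threshold_le (hν : 1 ≤ ν) (hℓ : 1 ≤ ℓ) (hD : D ≤ ν ^ 2) (ha : 0 ≤ a) :
    32 * (2 * √(8 * (D + ℓ ^ 2) * a ^ 2) + 8 * (D + ℓ ^ 2) * w ^ 2) * s ^ 2 ≤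
      256 * (a * (ν * ℓ) * s ^ 2) + 512 * (w ^ 2 * (ν ^ 2 * ℓ ^ 2 + ℓ ^ 4) * s ^ 2) := by
  have hK := add_sq_le_two_mul_mul_sq hν hℓ hD
  have hsqrt : √(8 * (D + ℓ ^ 2) * a ^ 2) ≤ 4 * (ν * ℓ) * a :=
    sqrt_mul_sq_le (by positivity) ha (by linarith [mul_pow 4 (ν * ℓ) 2])
  have hpow : (ν * ℓ) ^ 2 ≤ ν ^ 2 * ℓ ^ 2 + ℓ ^ 4 := by
    rw [mul_pow]
    exact le_add_of_nonneg_right (by positivity)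
  calc 32 * (2 * √(8 * (D + ℓ ^ 2) * a ^ 2) + 8 * (D + ℓ ^ 2) * w ^ 2) * s ^ 2
      ≤ 32 * (2 * (4 * (ν * ℓ) * a) + 8 * (2 * (ν ^ 2 * ℓ ^ 2 + ℓ ^ 4)) * w ^ 2) * s ^ 2 := by
        gcongr
        exact hK.trans (by gcongr)
    _ = _ := by ring

lemma sq_mul_pow_four_mul_le (hℓ : 0 ≤ ℓ) (hs : 0 ≤ s) (hℓs : ℓ ^ 3 * s ≤ 1) :
    ν ^ 2 * ℓ ^ 4 * s ^ 4 ≤ ν ^ 2 * ℓ * s ^ 3 :=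
  calc ν ^ 2 * ℓ ^ 4 * s ^ 4 = ν ^ 2 * ℓ * s ^ 3 * (ℓ ^ 3 * s) := by ring
    _ ≤ ν ^ 2 * ℓ * s ^ 3 := mul_le_of_le_one_right (by positivity) hℓs

lemma sup_terms_le (hℓ : 0 ≤ ℓ) (hs : 0 ≤ s) (hℓs : ℓ ^ 3 * s ≤ 1) :
    ν * (ℓ ^ 2 * (ν * ℓ + ℓ ^ 2) * w) * s ^ 3 ≤
      2 * (ν ^ 2 * ℓ * s ^ 3) + w ^ 2 * (ν ^ 2 * ℓ ^ 2 + ℓ ^ 4) * s ^ 2 := by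
  -- AM-GM separates `w` from `ν` and from `ℓ`.
  have hamgm (x : ℝ) : w * x * s ≤ w ^ 2 + x ^ 2 * s ^ 2 := by
    nlinarith [sq_nonneg (w - x * s), sq_nonneg w, sq_nonneg (x * s)]
  calc ν * (ℓ ^ 2 * (ν * ℓ + ℓ ^ 2) * w) * s ^ 3
      = ν ^ 2 * ℓ ^ 2 * s ^ 2 * (w * ℓ * s) + ℓ ^ 4 * s ^ 2 * (w * ν * s) := by ring
    _ ≤ ν ^ 2 * ℓ ^ 2 * s ^ 2 * (w ^ 2 + ℓ ^ 2 * s ^ 2) +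
        ℓ ^ 4 * s ^ 2 * (w ^ 2 + ν ^ 2 * s ^ 2) := by gcongr <;> exact hamgm _
    _ = 2 * (ν ^ 2 * ℓ ^ 4 * s ^ 4) + w ^ 2 * (ν ^ 2 * ℓ ^ 2 + ℓ ^ 4) * s ^ 2 := by ring
    _ ≤ _ := by gcongr 2 * ?_ + _; exact sq_mul_pow_four_mul_le hℓ hs hℓs

lemma cross_threshold_le (hν : 0 ≤ ν) (hℓ : 1 ≤ ℓ) (hD : D ≤ ν ^ 2) (hs : 0 ≤ s)
    (hℓs : ℓ ^ 3 * s ≤ 1) (hm : 0 ≤ m) (hw : 0 ≤ w) (ht₀ : 0 ≤ t)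
    (ht : t ≤ m) :
    √D * (512 * √D * t + 2 * √(2 * ℓ ^ 2 * (2 ^ 17 * D * m ^ 2)) +
        2 * ℓ ^ 2 * (w * (16 * (8 * (√(D * ℓ ^ 2) + ℓ ^ 2))))) * s ^ 3 ≤
      1536 * ((m + 1) * ν ^ 2 * ℓ * s ^ 3) +
        256 * (w ^ 2 * (ν ^ 2 * ℓ ^ 2 + ℓ ^ 4) * s ^ 2) := by
  have hℓ₀ : 0 ≤ ℓ := by linarith
  have hDν : √D ≤ ν := Real.sqrt_le_iff.2 ⟨hν, hD⟩
  have hDℓ : √(D * ℓ ^ 2) ≤ ν * ℓ := sqrt_mul_sq_le hν hℓ₀ hD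
  have hvar : √(2 * ℓ ^ 2 * (2 ^ 17 * D * m ^ 2)) ≤ 512 * (ν * ℓ) * m := by
    rw [← mul_assoc]
    exact sqrt_mul_sq_le (by positivity) hm (by nlinarith [sq_nonneg ℓ])
  calc √D * (512 * √D * t + 2 * √(2 * ℓ ^ 2 * (2 ^ 17 * D * m ^ 2)) +
        2 * ℓ ^ 2 * (w * (16 * (8 * (√(D * ℓ ^ 2) + ℓ ^ 2))))) * s ^ 3
      ≤ ν * (512 * ν * (m * ℓ) + 2 * (512 * (ν * ℓ) * m) +
        2 * ℓ ^ 2 * (w * (16 * (8 * (ν * ℓ + ℓ ^ 2))))) * s ^ 3 := by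
        gcongr
        exact ht.trans (le_mul_of_one_le_right hm hℓ)
    _ = 1536 * (m * ν ^ 2 * ℓ * s ^ 3) + 256 * (ν * (ℓ ^ 2 * (ν * ℓ + ℓ ^ 2) * w) * s ^ 3) := by
        ring
    _ ≤ 1536 * (m * ν ^ 2 * ℓ * s ^ 3) + 256 * (2 * (ν ^ 2 * ℓ * s ^ 3) +
        w ^ 2 * (ν ^ 2 * ℓ ^ 2 + ℓ ^ 4) * s ^ 2) := by
        gcongr
        exact sup_terms_le hℓ₀ hs hℓs
    _ ≤ _ := by nlinarith [show 0 ≤ ν ^ 2 * ℓ * s ^ 3 by positivity]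

lemma cubic_threshold_terms_le (hν : 1 ≤ ν) (hℓ : 1 ≤ ℓ) :
    512 * ν + 256 * (ν ^ 3 * ℓ + ν ^ 2 * ℓ ^ 2 + ν * ℓ ^ 3) ≤ 1280 * (ν * ℓ) ^ 3 := by
  have : 0 ≤ ν := by linarith
  have hmono {i j : ℕ} (hi : i ≤ 3) (hj : j ≤ 3) : ν ^ i * ℓ ^ j ≤ (ν * ℓ) ^ 3 := by
    rw [mul_pow]
    gcongr
  have h₁ := hmono (i := 1) (j := 0) (by norm_num) (by norm_num)
  have h₂ := hmono (i := 3) (j := 1) (by norm_num) (by norm_num)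
  have h₃ := hmono (i := 2) (j := 2) (by norm_num) (by norm_num)
  have h₄ := hmono (i := 1) (j := 3) (by norm_num) (by norm_num)
  linarith

lemma quartic_threshold_le (hν : 1 ≤ ν) (hℓ : 1 ≤ ℓ) (hD₀ : 0 ≤ D) (hD : D ≤ ν ^ 2)
    (hs : 0 < s) (hℓs : ℓ ^ 3 * s ≤ 1) (ht₀ : 0 ≤ t) (ht : t ≤ 1) :
    32 * (512 * √D * t + 2 * √(2 * (D + ℓ ^ 2) * (2 ^ 17 * D * (s⁻¹) ^ 2)) +
        2 * (D + ℓ ^ 2) * (16 * (8 * (√(D * ℓ ^ 2) + ℓ ^ 2)))) * s ^ 4 ≤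
      60000 * (ν ^ 2 * ℓ * s ^ 3) + 50000 * ((ν * ℓ) ^ 3 * s ^ 4) := by
  have hν₀ : 0 ≤ ν := by linarith
  have hℓ₀ : 0 ≤ ℓ := by linarith
  have hDν : √D ≤ ν := Real.sqrt_le_iff.2 ⟨hν₀, hD⟩
  have hDℓ : √(D * ℓ ^ 2) ≤ ν * ℓ := sqrt_mul_sq_le hν₀ hℓ₀ hD
  have hvar : √(2 * (D + ℓ ^ 2) * (2 ^ 17 * D * (s⁻¹) ^ 2)) ≤ 750 * ν ^ 2 * ℓ * s⁻¹ := by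
    rw [← mul_assoc]
    refine sqrt_mul_sq_le (by positivity) (by positivity) ?_
    calc 2 * (D + ℓ ^ 2) * (2 ^ 17 * D) ≤ 2 * (2 * (ν * ℓ) ^ 2) * (2 ^ 17 * ν ^ 2) := by
          gcongr; exact add_sq_le_two_mul_mul_sq hν hℓ hD
      _ ≤ (750 * ν ^ 2 * ℓ) ^ 2 := by nlinarith [sq_nonneg (ν ^ 2 * ℓ)]
  have hcubic := cubic_threshold_terms_le hν hℓ
  have hpow : ℓ ^ 4 * s ^ 4 ≤ ν ^ 2 * ℓ * s ^ 3 := by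
    refine (sq_mul_pow_four_mul_le (ν := ν) hℓ₀ hs.le hℓs).trans' ?_
    rw [mul_assoc]
    exact le_mul_of_one_le_left (by positivity) (one_le_pow₀ hν)
  calc 32 * (512 * √D * t + 2 * √(2 * (D + ℓ ^ 2) * (2 ^ 17 * D * (s⁻¹) ^ 2)) +
        2 * (D + ℓ ^ 2) * (16 * (8 * (√(D * ℓ ^ 2) + ℓ ^ 2)))) * s ^ 4
      ≤ 32 * (512 * ν * 1 + 2 * (750 * ν ^ 2 * ℓ * s⁻¹) +
        2 * (ν ^ 2 + ℓ ^ 2) * (16 * (8 * (ν * ℓ + ℓ ^ 2)))) * s ^ 4 := by gcongr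
    _ = 32 * ((512 * ν + 256 * (ν ^ 3 * ℓ + ν ^ 2 * ℓ ^ 2 + ν * ℓ ^ 3)) * s ^ 4 +
        1500 * (ν ^ 2 * ℓ * s ^ 3) + 256 * (ℓ ^ 4 * s ^ 4)) := by
        field_simp
        ring
    _ ≤ 32 * (1280 * (ν * ℓ) ^ 3 * s ^ 4 + 1500 * (ν ^ 2 * ℓ * s ^ 3) +
        256 * (ν ^ 2 * ℓ * s ^ 3)) := by gcongr
    _ ≤ _ := by nlinarith [show 0 ≤ ν ^ 2 * ℓ * s ^ 3 by positivity,
        show 0 ≤ (ν * ℓ) ^ 3 * s ^ 4 by positivity]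

lemma thresholds_sum_le (hν : 1 ≤ ν) (hℓ : 1 ≤ ℓ) (hD₀ : 0 ≤ D) (hD : D ≤ ν ^ 2) (hs : 0 < s)
    (hℓs : ℓ ^ 3 * s ≤ 1) (ha : 0 ≤ a) (hb : 0 ≤ b) (hm : 0 ≤ m) (hw : 0 ≤ w) (ht₀ : 0 ≤ t)
    (ht : t ≤ m) (ht'₀ : 0 ≤ t') (ht' : t' ≤ 1) (hq : 0 ≤ q) :
    (2 * √(8 * D * ℓ ^ 2 * a ^ 2) + 8 * ℓ ^ 2 * w ^ 2) * s ^ 2 +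
      4 * √((D + ℓ ^ 2) * b ^ 2) * s +
      √D * (512 * √D * t + 2 * √(2 * ℓ ^ 2 * (2 ^ 17 * D * m ^ 2)) +
        2 * ℓ ^ 2 * (w * (16 * (8 * (√(D * ℓ ^ 2) + ℓ ^ 2))))) * s ^ 3 +
      32 * (2 * √(8 * (D + ℓ ^ 2) * a ^ 2) + 8 * (D + ℓ ^ 2) * w ^ 2) * s ^ 2 +
      32 * (512 * √D * t' + 2 * √(2 * (D + ℓ ^ 2) * (2 ^ 17 * D * (s⁻¹) ^ 2)) +
        2 * (D + ℓ ^ 2) * (16 * (8 * (√(D * ℓ ^ 2) + ℓ ^ 2)))) * s ^ 4 + q ≤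
    100000 * ((m + 1) * ν ^ 2 * ℓ * s ^ 3 + a * (ν * ℓ) * s ^ 2 + b * (ν + ℓ) * s +
      w ^ 2 * (ν ^ 2 * ℓ ^ 2 + ℓ ^ 4) * s ^ 2 + (ν * ℓ) ^ 3 * s ^ 4 + q) := by
  have hν₀ : 0 ≤ ν := by linarith
  have hℓ₀ : 0 ≤ ℓ := by linarith
  have hlinear := linear_threshold_le (s := s) (w := w) hν₀ hℓ hD ha
  have hcubic := cubic_threshold_le hν₀ hℓ₀ hD hb hs.le
  have hcross := cross_threshold_le hν₀ hℓ hD hs.le hℓs hm hw ht₀ ht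
  have hquadratic := quadratic_threshold_le (s := s) (w := w) hν hℓ hD ha
  have hquartic := quartic_threshold_le hν hℓ hD₀ hD hs hℓs ht'₀ ht'
  have h₁ : 0 ≤ m * (ν ^ 2 * ℓ * s ^ 3) := by positivity
  have h₂ : 0 ≤ ν ^ 2 * ℓ * s ^ 3 := by positivity
  have h₃ : 0 ≤ a * (ν * ℓ) * s ^ 2 := by positivity
  have h₄ : 0 ≤ b * (ν + ℓ) * s := by positivity
  have h₅ : 0 ≤ w ^ 2 * (ν ^ 2 * ℓ ^ 2 + ℓ ^ 4) * s ^ 2 := by positivity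
  have h₆ : 0 ≤ (ν * ℓ) ^ 3 * s ^ 4 := by positivity
  grw [hlinear, hcubic, hcross, hquadratic, hquartic]
  linarith

end Thresholds

section Deviation

variable {N d : ℕ} {L : ℝ}

/-- A high-probability bound, at confidence level `exp (-2 * L)` up to a factor linear in `N` and
`d`, for the deviation of `specMat` from its rank-one limit. The first five terms are the thresholds
for the five statistics in `specNorm_specMat_sub_le`, in the same order. -/
noncomputable def deviationBound (d : ℕ) (v : Fin N → ℝ) (L : ℝ) : ℝ :=
  (2 * √(8 * d * L * (lpNorm 4 v ^ 2) ^ 2) + 8 * L * supNorm v ^ 2) / N +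
  4 * √((d + L) * (lpNorm 6 v ^ 3) ^ 2) / √N +
  √d * (512 * √d * (Real.exp (-L) * ∑ i, |v i|) + 2 * √(2 * L * (2 ^ 17 * d * eucNorm v ^ 2)) +
    2 * L * (supNorm v * (16 * (8 * (√(d * L) + L))))) / √N ^ 3 +
  32 * (2 * √(8 * (d + L) * (lpNorm 4 v ^ 2) ^ 2) + 8 * (d + L) * supNorm v ^ 2) / N +
  32 * (512 * √d * (Real.exp (-L) * N) + 2 * √(2 * (d + L) * (2 ^ 17 * d * N)) +
    2 * (d + L) * (16 * (8 * (√(d * L) + L)))) / N ^ 2 +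
  |eucNorm v ^ 2 - 1| / N

lemma abs_le_supNorm (v : Fin N → ℝ) (i : Fin N) : |v i| ≤ supNorm v :=
  le_ciSup (f := fun i => |v i|) (Set.finite_range _).bddAbove i

lemma supNorm_nonneg (v : Fin N → ℝ) : 0 ≤ supNorm v :=
  Real.iSup_nonneg fun _ => abs_nonneg _

lemma sum_abs_le_sqrt_mul_eucNorm (v : Fin N → ℝ) : ∑ i, |v i| ≤ √N * eucNorm v := by
  have h := Finset.sum_mul_sq_le_sq_mul_sq Finset.univ (fun _ : Fin N => (1 : ℝ)) fun i => |v i|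
  simp only [one_mul, one_pow, Finset.sum_const, Finset.card_univ, Fintype.card_fin,
    nsmul_eq_mul, mul_one, sq_abs] at h
  rw [eucNorm, ← Real.sqrt_mul N.cast_nonneg]
  exact Real.le_sqrt_of_sq_le h

lemma measure_union_le_of_le {Ω : Type*} [MeasurableSpace Ω] {μ : Measure Ω} {s t : Set Ω}
    {a b : ENNReal} (hs : μ s ≤ a) (ht : μ t ≤ b) : μ (s ∪ t) ≤ a + b :=
  (measure_union_le s t).trans (add_le_add hs ht)

lemma measure_specNorm_specMat_sub_gt_le (hN : 0 < N) (v : Fin N → ℝ) (hL : 0 < L) :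
    iidGaussVec N d 1 {g | deviationBound d v L <
        specNorm (specMat (gaussBasis (n := d + 1) v fun i => (√N)⁻¹ • g i) -
          (lpNorm 4 v ^ 4 - 3 / N) • vecMulVec (e1vec (d + 1)) (e1vec (d + 1)))} ≤
      (2 * N + d + 4) * (2 * ENNReal.ofReal (Real.exp (-(2 * L)))) := by
  have hsup (i : Fin N) : |v i ^ 2| ≤ supNorm v ^ 2 := by
    rw [abs_pow]
    exact pow_le_pow_left₀ (abs_nonneg _) (abs_le_supNorm v i) 2
  have hfour : ∑ i, (v i ^ 2) ^ 2 = (lpNorm 4 v ^ 2) ^ 2 := by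
    simp only [← pow_mul, Nat.reduceMul, lpNorm_four_pow_four]
  have hsix : ∑ i, (v i ^ 3) ^ 2 = (lpNorm 6 v ^ 3) ^ 2 := by
    simp only [← pow_mul, Nat.reduceMul, lpNorm_six_pow_six]
  have hlinear := measure_abs_sum_mul_normSqDev_gt_le (d := d) (sq_nonneg (supNorm v)) hsup hL
  have hcubic := measure_eucNorm_weighted_sum_gt_le (d := d) (fun i => v i ^ 3) hL
  have hcross := measure_eucNorm_sum_normSqDev_smul_gt_le (d := d) (supNorm_nonneg v)
    (abs_le_supNorm v) hL
  have hquadratic := measure_specNorm_weightedGram_sub_gt_le (d := d)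
    (sq_nonneg (supNorm v)) hsup hL
  have hquartic := measure_specNorm_weightedGram_normSqDev_sub_gt_le (N := N) (d := d) hL
  rw [hfour] at hlinear hquadratic
  rw [hsix] at hcubic
  rw [← eucNorm_sq] at hcross
  refine ((measure_mono fun g hg => ?_).trans (measure_union_le_of_le hlinear
    (measure_union_le_of_le hcubic (measure_union_le_of_le hcross
      (measure_union_le_of_le hquadratic hquartic))))).trans_eq (by ring)
  simp only [Set.mem_union, Set.mem_ofPred_eq] at hg ⊢
  contrapose! hg
  obtain ⟨h₁, h₂, h₃, h₄, h₅⟩ := hg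
  refine (specNorm_specMat_sub_le hN v g).trans ?_
  rw [deviationBound]
  gcongr

end Deviation

section Main

variable {N d n : ℕ} {v : Fin N → ℝ} {C δ L : ℝ}

lemma etaBound_eq (hL : 0 ≤ L) (hlog : Real.log (N / δ) = L) :
    etaBound C N n v δ = C * ((eucNorm v + 1) * √n ^ 2 * √L * (√N)⁻¹ ^ 3 +
      lpNorm 4 v ^ 2 * (√n * √L) * (√N)⁻¹ ^ 2 + lpNorm 6 v ^ 3 * (√n + √L) * (√N)⁻¹ +
      supNorm v ^ 2 * (√n ^ 2 * √L ^ 2 + √L ^ 4) * (√N)⁻¹ ^ 2 +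
      (√n * √L) ^ 3 * (√N)⁻¹ ^ 4 + |eucNorm v ^ 2 - 1| / N) := by
  have hrpow {x : ℝ} (hx : 0 ≤ x) : x ^ ((3 : ℝ) / 2) = √x ^ 3 := by
    rw [Real.sqrt_eq_rpow, ← Real.rpow_mul_natCast hx]
    norm_num
  have hpow {x : ℝ} (hx : 0 ≤ x) : √x ^ 4 = x ^ 2 := by
    rw [pow_mul (√x) 2 2, Real.sq_sqrt hx]
  rw [etaBound, hlog, hrpow N.cast_nonneg, hrpow (mul_nonneg n.cast_nonneg hL),
    Real.sqrt_mul n.cast_nonneg]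
  simp only [inv_pow, hpow hL, hpow N.cast_nonneg, Real.sq_sqrt hL, Real.sq_sqrt n.cast_nonneg,
    Real.sq_sqrt N.cast_nonneg, div_eq_mul_inv]

lemma deviationBound_eq (hL : 0 ≤ L) :
    deviationBound d v L =
      (2 * √(8 * d * √L ^ 2 * (lpNorm 4 v ^ 2) ^ 2) + 8 * √L ^ 2 * supNorm v ^ 2) * (√N)⁻¹ ^ 2 +
      4 * √((d + √L ^ 2) * (lpNorm 6 v ^ 3) ^ 2) * (√N)⁻¹ +
      √d * (512 * √d * (Real.exp (-L) * ∑ i, |v i|) +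
        2 * √(2 * √L ^ 2 * (2 ^ 17 * d * eucNorm v ^ 2)) +
        2 * √L ^ 2 * (supNorm v * (16 * (8 * (√(d * √L ^ 2) + √L ^ 2))))) * (√N)⁻¹ ^ 3 +
      32 * (2 * √(8 * (d + √L ^ 2) * (lpNorm 4 v ^ 2) ^ 2) +
        8 * (d + √L ^ 2) * supNorm v ^ 2) * (√N)⁻¹ ^ 2 +
      32 * (512 * √d * (Real.exp (-L) * N) +
        2 * √(2 * (d + √L ^ 2) * (2 ^ 17 * d * (√N)⁻¹⁻¹ ^ 2)) +
        2 * (d + √L ^ 2) * (16 * (8 * (√(d * √L ^ 2) + √L ^ 2)))) * (√N)⁻¹ ^ 4 +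
      |eucNorm v ^ 2 - 1| / N := by
  have hpow : √(N : ℝ) ^ 4 = N ^ 2 := by
    rw [pow_mul (√(N : ℝ)) 2 2, Real.sq_sqrt N.cast_nonneg]
  simp only [deviationBound, inv_pow, inv_inv, hpow, Real.sq_sqrt hL, Real.sq_sqrt N.cast_nonneg,
    div_eq_mul_inv]

lemma exp_neg_log_div (hN : 0 < N) (hδ : 0 < δ) : Real.exp (-Real.log (N / δ)) = δ / N := by
  rw [Real.exp_neg, Real.exp_log (by positivity), inv_div]

lemma one_le_log_div (hN : 3 ≤ N) (hδ₀ : 0 < δ) (hδ₁ : δ ≤ 1) : 1 ≤ Real.log (N / δ) := by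
  have hN₃ : (3 : ℝ) ≤ N := by exact_mod_cast hN
  rw [Real.le_log_iff_exp_le (by positivity), le_div_iff₀ hδ₀]
  nlinarith [Real.exp_one_lt_d9, Real.exp_pos 1]

lemma deviationBound_le_etaBound (hN : 3 ≤ N) (hδ₀ : 0 < δ) (hδ₁ : δ ≤ 1)
    (hlog : Real.log (N / δ) ^ 3 ≤ N) :
    deviationBound d v (Real.log (N / δ)) ≤ etaBound 100000 N (d + 1) v δ := by
  have hN₀ : 0 < N := by lia
  have hL := one_le_log_div hN hδ₀ hδ₁
  have hexp : Real.exp (-Real.log (N / δ)) = δ / N := exp_neg_log_div hN₀ hδ₀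
  rw [deviationBound_eq (by linarith), etaBound_eq (by linarith) rfl]
  have hsqrtN : 1 ≤ √(N : ℝ) := Real.one_le_sqrt.2 (by exact_mod_cast hN₀)
  have hsix : 0 ≤ lpNorm 6 v := by
    unfold _root_.lpNorm
    positivity
  refine thresholds_sum_le (Real.one_le_sqrt.2 (by simp)) (Real.one_le_sqrt.2 hL)
    d.cast_nonneg ?_ (by positivity) ?_ (sq_nonneg _) (pow_nonneg hsix 3)
    (eucNorm_nonneg v) (supNorm_nonneg v) (by positivity) ?_ (by positivity) ?_ (by positivity)
  · rw [Real.sq_sqrt (Nat.cast_nonneg _)]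
    exact_mod_cast d.le_succ
  · rw [← div_eq_mul_inv, div_le_one (by positivity)]
    refine Real.le_sqrt_of_sq_le ?_
    rwa [← pow_mul, mul_comm 3, pow_mul, Real.sq_sqrt (by linarith)]
  · have hexp_mul : Real.exp (-Real.log (N / δ)) * √N ≤ 1 := by
      rw [hexp, div_mul_eq_mul_div, div_le_one (by positivity)]
      nlinarith [Real.sq_sqrt N.cast_nonneg]
    calc Real.exp (-Real.log (N / δ)) * ∑ i, |v i|
        ≤ Real.exp (-Real.log (N / δ)) * (√N * eucNorm v) := by
          gcongr
          exact sum_abs_le_sqrt_mul_eucNorm v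
      _ = Real.exp (-Real.log (N / δ)) * √N * eucNorm v := by ring
      _ ≤ eucNorm v := mul_le_of_le_one_left (eucNorm_nonneg v) hexp_mul
  · rwa [hexp, div_mul_cancel₀ _ (by positivity)]

lemma gaussVec_map_smul (c : ℝ) (σ2 : NNReal) :
    (gaussVec d σ2).map (fun x => c • x) = gaussVec d (.mk (c ^ 2) (sq_nonneg c) * σ2) :=
  (Measure.pi_map_pi (f := fun _ x => c * x) fun _ => Measurable.aemeasurable
    (by fun_prop)).trans <| by simp only [gaussianReal_map_const_mul, mul_zero, gaussVec]

lemma iidGaussVec_map_smul (c : ℝ) (σ2 : NNReal) :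
    (iidGaussVec N d σ2).map (fun g i => c • g i) =
      iidGaussVec N d (.mk (c ^ 2) (sq_nonneg c) * σ2) := by
  have hrow := gaussVec_map_smul (d := d) c σ2
  have (_ : Fin N) : IsProbabilityMeasure ((gaussVec d σ2).map fun x => c • x) := by
    rw [hrow]
    infer_instance
  rw [iidGaussVec, Measure.pi_map_pi fun _ => Measurable.aemeasurable (by fun_prop), hrow,
    iidGaussVec]

lemma iidGaussVec_inv_eq_map :
    iidGaussVec N d (N : NNReal)⁻¹ = (iidGaussVec N d 1).map fun g i => (√N)⁻¹ • g i := by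
  rw [iidGaussVec_map_smul, mul_one]
  congr
  ext
  simp

instance (σ2 : NNReal) : IsProbabilityMeasure (iidGaussVec N d σ2) := by
  unfold iidGaussVec
  infer_instance

lemma failure_probability_le (hN : 8 ≤ N) (hd : d + 1 ≤ N) (hδ₀ : 0 < δ) (hδ₁ : δ ≤ 1) :
    (2 * N + d + 4) * (2 * ENNReal.ofReal (Real.exp (-(2 * Real.log (N / δ))))) ≤
      ENNReal.ofReal δ := by
  have hexp : Real.exp (-(2 * Real.log (N / δ))) = (δ / N) ^ 2 := by
    rw [← exp_neg_log_div (by lia) hδ₀, ← Real.exp_nat_mul]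
    congr 1
    push_cast
    ring
  have hreal : (2 * N + d + 4) * (2 * (δ / N) ^ 2) ≤ δ := by
    have hN₈ : (8 : ℝ) ≤ N := by exact_mod_cast hN
    have hdN : (d : ℝ) + 1 ≤ N := by exact_mod_cast hd
    calc (2 * N + d + 4) * (2 * (δ / N) ^ 2) ≤ (3 * N + 3) * (2 * (δ / N) ^ 2) := by
          gcongr ?_ * _
          linarith
      _ = δ * (6 * (N + 1) / N ^ 2) * δ := by ring
      _ ≤ δ * 1 * 1 := by
          gcongr
          rw [div_le_one (by positivity)]
          nlinarith
      _ = δ := by ring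
  refine le_of_eq_of_le ?_ (ENNReal.ofReal_le_ofReal hreal)
  rw [hexp, ENNReal.ofReal_mul (by positivity), ENNReal.ofReal_mul zero_le_two,
    ENNReal.ofReal_add (by positivity) (by norm_num), ENNReal.ofReal_add (by positivity)
    (by positivity), ENNReal.ofReal_mul zero_le_two]
  simp

theorem stmt_0_general (N n : ℕ) (v : Fin N → ℝ) (δ : ℝ) (hN : 8 ≤ N) (hn : 1 ≤ n) (hnN : n ≤ N)
    (hδ₀ : 0 < δ) (hδ₁ : δ < 1) (hlog : Real.log (N / δ) ^ 3 ≤ N) :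
    ENNReal.ofReal (1 - δ) ≤ (iidGaussVec N (n - 1) (N : NNReal)⁻¹)
      {B | specNorm (specMat (gaussBasis v B) -
          (lpNorm 4 v ^ 4 - 3 / N) • vecMulVec (e1vec n) (e1vec n)) ≤
        etaBound 100000 N n v δ} := by
  obtain ⟨d, rfl⟩ := Nat.exists_eq_add_of_le' hn
  have hL := one_le_log_div (by lia) hδ₀ hδ₁.le (N := N)
  have hfail := (measure_specNorm_specMat_sub_gt_le (d := d) (by lia) v
    (by linarith)).trans (failure_probability_le hN hnN hδ₀ hδ₁.le)
  change _ ≤ iidGaussVec N d (N : NNReal)⁻¹ _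
  rw [iidGaussVec_inv_eq_map]
  refine le_trans ?_ (Measure.le_map_apply (Measurable.aemeasurable (by fun_prop)) _)
  rw [ENNReal.ofReal_sub _ hδ₀.le, ENNReal.ofReal_one, tsub_le_iff_left]
  calc (1 : ENNReal) = iidGaussVec N d 1 Set.univ := measure_univ.symm
    _ ≤ _ := measure_univ_le_add_compl _
    _ ≤ _ := add_le_add hfail (measure_mono fun g hg => ?_)
  rw [Set.mem_compl_iff, Set.notMem_ofPred_iff, not_lt] at hg
  exact hg.trans (deviationBound_le_etaBound (by lia) hδ₀ hδ₁.le hlog)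

end Main

/-- with rows `y_iᵀ = (v_i, b_iᵀ)`, `b_i` i.i.d. `N(0, (1/N) I_{n-1})`, and
`M = ∑_i (‖y_i‖² - (n-1)/N) y_i y_iᵀ - (3/N) I_n`, there is a universal constant `C > 0`
such that for every `δ ∈ (0,1)` with `N ≥ log⁷(N/δ)`, with probability at least `1 - δ`,
`‖M - (‖v‖₄⁴ - 3/N) e₁e₁ᵀ‖ ≤ η`. -/
theorem stmt_0 :
    ∃ C : ℝ, 0 < C ∧ ∃ N₀ : ℕ,
      ∀ (N n : ℕ) (v : Fin N → ℝ) (δ : ℝ), N₀ ≤ N → 1 ≤ n → n ≤ N → 0 < δ → δ < 1 →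
        (Real.log (N / δ)) ^ 7 ≤ N →
        ENNReal.ofReal (1 - δ) ≤
          (iidGaussVec N (n - 1) ((N : NNReal))⁻¹)
            {B | specNorm
                (specMat (gaussBasis v B)
                  - (lpNorm 4 v ^ 4 - 3 / N) • Matrix.vecMulVec (e1vec n) (e1vec n))
              ≤ etaBound C N n v δ} := by
  refine ⟨100000, by norm_num, 8, fun N n v δ hN hn hnN hδ₀ hδ₁ hlog => ?_⟩
  have hL := one_le_log_div (by lia) hδ₀ hδ₁.le (N := N)
  exact stmt_0_general N n v δ hN hn hnN hδ₀ hδ₁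
    ((pow_le_pow_right₀ hL (by norm_num)).trans hlog)
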